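/- Fix an integer d ≥ 3 and a real p with 1/(d-1) < p < 1, and let q ∈ [0,1) satisfy q = (1-p+pq)^{d-1}. Set θ₁ = 1 − q(1−p) − p q², η₁ = (1/2) p d (1 − q²), θ₂ = 1 − q − (d−1) p q (1−q), and η₂ = (1/2) p d (1 − q)². Then for every ε > 0 and b > 0 there exist c, C, R > 0 such that: if 𝒢 is a regular (b,d)-expander on n vertices with girth at least R, then with probability at least 1 − C·exp(−c n), the random graph G ∼ 𝒢_p satisfies | excess(C₁(G)) − (η₁−θ₁) n | ≤ 2εn and | excess(C₁^{(2)}(G)) − (η₂−θ₂) n | ≤ 2εn, where C₁(G) is a largest connected component of G and C₁^{(2)}(G) is its 2-core. -/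

import Mathlib

open scoped Classical symmDiff

noncomputable section

namespace Percolation

variable {V : Type} [Fintype V] [DecidableEq V]

/-- The edge set of `G` as a finset. -/
noncomputable def edgeFinset' (G : SimpleGraph V) : Finset (Sym2 V) :=
  Finset.univ.filter (· ∈ G.edgeSet)

/-- Probability that bond percolation on `G` with parameter `p` produces a spanning
subgraph satisfying `P`. -/
noncomputable def percProb (G : SimpleGraph V) (p : ℝ) (P : SimpleGraph V → Prop) : ℝ :=
  ∑ s ∈ (edgeFinset' G).powerset,
    (p ^ s.card * (1 - p) ^ ((edgeFinset' G).card - s.card)) *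
      (if P (SimpleGraph.fromEdgeSet (↑s)) then 1 else 0)

/-- Joint probability for two independent bond percolations on `G`. -/
noncomputable def percProb2 (G : SimpleGraph V) (p₁ p₂ : ℝ)
    (P : SimpleGraph V → SimpleGraph V → Prop) : ℝ :=
  ∑ s ∈ (edgeFinset' G).powerset, ∑ t ∈ (edgeFinset' G).powerset,
    (p₁ ^ s.card * (1 - p₁) ^ ((edgeFinset' G).card - s.card)) *
    (p₂ ^ t.card * (1 - p₂) ^ ((edgeFinset' G).card - t.card)) *
      (if P (SimpleGraph.fromEdgeSet (↑s)) (SimpleGraph.fromEdgeSet (↑t)) then 1 else 0)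

/-- Number of edges of `G` joining `S` to its complement. -/
noncomputable def cutCard (G : SimpleGraph V) (S : Finset V) : ℕ :=
  ((edgeFinset' G).filter (fun e => ∃ x ∈ S, ∃ y, y ∉ S ∧ e = s(x, y))).card

/-- `G` is a `(b,d)`-expander: max degree at most `d`, and every vertex set of size at most
`n/2` has at least `b|S|` edges to its complement. -/
def IsExpander (G : SimpleGraph V) (b : ℝ) (d : ℕ) : Prop :=
  (∀ v, (G.neighborSet v).ncard ≤ d) ∧
  ∀ S : Finset V, (S.card : ℝ) ≤ Fintype.card V / 2 → b * S.card ≤ cutCard G S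

/-- `G` is a regular `(b,d)`-expander. -/
def IsRegularExpander (G : SimpleGraph V) (b : ℝ) (d : ℕ) : Prop :=
  IsExpander G b d ∧ ∀ v, (G.neighborSet v).ncard = d

/-- The vertices of the connected component `c` of `G`. -/
noncomputable def compVerts (G : SimpleGraph V) (c : G.ConnectedComponent) : Finset V :=
  Finset.univ.filter (fun v => G.connectedComponentMk v = c)

/-- The edges of the connected component `c` of `G`. -/
noncomputable def compEdges (G : SimpleGraph V) (c : G.ConnectedComponent) : Finset (Sym2 V) :=
  (edgeFinset' G).filter (fun e => ∀ v ∈ e, G.connectedComponentMk v = c)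

/-- `c` is a largest connected component of `G`. -/
def IsLargestComp (G : SimpleGraph V) (c : G.ConnectedComponent) : Prop :=
  ∀ c' : G.ConnectedComponent, (compVerts G c').card ≤ (compVerts G c).card

/-- The 2-core of the connected component `c` of `G` : the maximal subgraph of `G`
supported inside `c` all of whose vertices have degree at least 2. -/
noncomputable def twoCoreComp (G : SimpleGraph V) (c : G.ConnectedComponent) : SimpleGraph V :=
  sSup {H : SimpleGraph V | H ≤ G ∧ (∀ v ∈ H.support, G.connectedComponentMk v = c) ∧
    ∀ v ∈ H.support, 2 ≤ (H.neighborSet v).ncard}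

/-- The event `A^R_{x,y}(H)`: the connected component of `y` in `H` with the edge `xy`
removed (if present) has at least `R` vertices. -/
def eventA (H : SimpleGraph V) (R : ℕ) (x y : V) : Prop :=
  R ≤ (compVerts (H.deleteEdges {s(x, y)})
        ((H.deleteEdges {s(x, y)}).connectedComponentMk y)).card

/-- `E₁(H)`: edges `xy` of `H` such that `A^R_{x,y}` or `A^R_{y,x}` holds. -/
noncomputable def E1set (H : SimpleGraph V) (R : ℕ) : Finset (Sym2 V) :=
  (edgeFinset' H).filter (fun e => ∃ x y, e = s(x, y) ∧ (eventA H R x y ∨ eventA H R y x))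

/-- `V₁(H)`: vertices `x` such that for some `y`, `xy ∈ E(H)` and `A^R_{x,y}` holds. -/
noncomputable def V1set (H : SimpleGraph V) (R : ℕ) : Finset V :=
  Finset.univ.filter (fun x => ∃ y, H.Adj x y ∧ eventA H R x y)

/-- `E₂(H)`: edges `xy` of `H` such that both `A^R_{x,y}` and `A^R_{y,x}` hold. -/
noncomputable def E2set (H : SimpleGraph V) (R : ℕ) : Finset (Sym2 V) :=
  (edgeFinset' H).filter (fun e => ∃ x y, e = s(x, y) ∧ eventA H R x y ∧ eventA H R y x)

/-- `V₂(H)`: vertices incident to an edge of `E₂(H)`. -/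
noncomputable def V2set (H : SimpleGraph V) (R : ℕ) : Finset V :=
  Finset.univ.filter (fun x => ∃ e ∈ E2set H R, x ∈ e)

/-- `V̄₁(H)`: vertices `y` such that `A^R_{x,y}(H)` holds for some `x`. -/
noncomputable def Vbar1 (H : SimpleGraph V) (R : ℕ) : Finset V :=
  Finset.univ.filter (fun y => ∃ x, eventA H R x y)

/-- `S` is `k`-thick in `H`: a union of pairwise disjoint subsets, each of size at least
`k`, each inducing a connected subgraph of `H`. -/
def IsThick (H : SimpleGraph V) (k : ℕ) (S : Finset V) : Prop :=
  ∃ P : Finset (Finset V),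
    (∀ T ∈ P, k ≤ T.card ∧ (H.induce (↑T : Set V)).Connected) ∧
    (↑P : Set (Finset V)).PairwiseDisjoint id ∧ S = P.biUnion id

/-- `S` is a separator of `K`. -/
def IsSeparator {W : Type} [Fintype W] (K : SimpleGraph W) (S : Finset W) : Prop :=
  ∃ A B : Finset W, Disjoint A B ∧ Disjoint A S ∧ Disjoint B S ∧
    (∀ w, w ∈ A ∨ w ∈ B ∨ w ∈ S) ∧
    (∀ a ∈ A, ∀ b ∈ B, ¬ K.Adj a b) ∧
    3 * A.card ≤ 2 * Fintype.card W ∧ 3 * B.card ≤ 2 * Fintype.card W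

/-!
Say that a vertex *survives* if a `G`-path of `k + 1` open edges starts at it. When the girth
exceeds `2k + 2`, this depends only on a tree around the vertex, so survival probabilities follow
the recursion of a branching process, whose extinction probabilities tend to `q`. The number of
survivors, and the number of open edges at survivors minus the number of survivors, are sums of
local functions, hence change boundedly when one edge is added and concentrate around their means.

Survivors are essentially the vertices of the largest component. Write percolation at `p` as the
union of percolation at a slightly smaller `p₁`, for which almost as many vertices survive, and an
independent sprinkling. Survivors at `p₁` lie in components with at least `k + 2` vertices; there
are at most `n / (k + 2)` of these, so at most `2 ^ (n / (k + 2))` ways to split them into two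
parts. For a given split into parts of linear size, expansion provides linearly many edge-disjoint
paths of bounded length between the parts, and the sprinkling opens none of them with
exponentially small probability. So for large `k` no such split remains.

Finally, a nonempty 2-core has the excess of its component, since a pendant edge is removed along
with exactly one vertex.
-/

section BernoulliSubset

variable {α : Type*}

/-- The expectation of `f` over a random subset of `E` that contains each element independently
with probability `p`. -/
def bernExp (p : ℝ) (E : Finset α) (f : Finset α → ℝ) : ℝ :=
  ∑ s ∈ E.powerset, (p ^ s.card * (1 - p) ^ (E.card - s.card)) * f s

/-- The probability that a random subset of `E` that contains each element independently with
probability `p` satisfies `P`. -/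
def bernProb (p : ℝ) (E : Finset α) (P : Finset α → Prop) : ℝ :=
  bernExp p E fun s => if P s then 1 else 0

lemma bernExp_ite (p : ℝ) (E : Finset α) (P : Finset α → Prop) [DecidablePred P] :
    bernExp p E (fun s => if P s then 1 else 0) = bernProb p E P := by
  unfold bernProb
  congr!

lemma bernExp_empty (p : ℝ) (f : Finset α → ℝ) : bernExp p ∅ f = f ∅ := by
  simp [bernExp]

lemma bernExp_add (p : ℝ) (E : Finset α) (f g : Finset α → ℝ) :
    bernExp p E (fun s => f s + g s) = bernExp p E f + bernExp p E g := by
  simp [bernExp, mul_add, Finset.sum_add_distrib]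

lemma bernExp_const_mul (p : ℝ) (E : Finset α) (c : ℝ) (f : Finset α → ℝ) :
    bernExp p E (fun s => c * f s) = c * bernExp p E f := by
  simp only [bernExp, Finset.mul_sum]
  exact Finset.sum_congr rfl fun s _ => by ring

lemma bernExp_sub (p : ℝ) (E : Finset α) (f g : Finset α → ℝ) :
    bernExp p E (fun s => f s - g s) = bernExp p E f - bernExp p E g := by
  simp [bernExp, mul_sub, Finset.sum_sub_distrib]

lemma bernExp_sum {ι : Type*} (p : ℝ) (E : Finset α) (I : Finset ι) (f : ι → Finset α → ℝ) :
    bernExp p E (fun s => ∑ i ∈ I, f i s) = ∑ i ∈ I, bernExp p E (f i) := by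
  simp only [bernExp, Finset.mul_sum]
  exact Finset.sum_comm

lemma bernExp_congr {p : ℝ} {E : Finset α} {f g : Finset α → ℝ} (h : ∀ s ⊆ E, f s = g s) :
    bernExp p E f = bernExp p E g :=
  Finset.sum_congr rfl fun s hs => by rw [h s (Finset.mem_powerset.1 hs)]

lemma bernExp_mono {p : ℝ} (hp : p ∈ Set.Icc (0 : ℝ) 1) {E : Finset α} {f g : Finset α → ℝ}
    (h : ∀ s ⊆ E, f s ≤ g s) : bernExp p E f ≤ bernExp p E g :=
  Finset.sum_le_sum fun s hs => mul_le_mul_of_nonneg_left (h s (Finset.mem_powerset.1 hs))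
    (mul_nonneg (pow_nonneg hp.1 _) (pow_nonneg (sub_nonneg.2 hp.2) _))

variable [DecidableEq α]

lemma bernExp_insert (p : ℝ) {E : Finset α} {e : α} (he : e ∉ E) (f : Finset α → ℝ) :
    bernExp p (insert e E) f =
      p * bernExp p E (fun s => f (insert e s)) + (1 - p) * bernExp p E f := by
  unfold bernExp
  rw [Finset.sum_powerset_insert he, add_comm, Finset.mul_sum, Finset.mul_sum]
  congr 1 <;> refine Finset.sum_congr rfl fun s hs => ?_
  · have hes : e ∉ s := fun h => he (Finset.mem_powerset.1 hs h)
    rw [Finset.card_insert_of_notMem hes, Finset.card_insert_of_notMem he, Nat.add_sub_add_right]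
    ring
  · rw [Finset.card_insert_of_notMem he,
      Nat.sub_add_comm (Finset.card_le_card (Finset.mem_powerset.1 hs))]
    ring

omit [DecidableEq α] in
lemma bernExp_const (p : ℝ) (E : Finset α) (c : ℝ) : bernExp p E (fun _ => c) = c := by
  induction E using Finset.induction_on with
  | empty => exact bernExp_empty p _
  | insert e E he ih => rw [bernExp_insert p he, ih]; ring

lemma bernExp_union {p p₁ p₂ : ℝ} (h : 1 - p = (1 - p₁) * (1 - p₂)) (E : Finset α)
    (f : Finset α → ℝ) :
    bernExp p₁ E (fun s => bernExp p₂ E fun t => f (s ∪ t)) = bernExp p E f := by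
  induction E using Finset.induction_on generalizing f with
  | empty => simp [bernExp_empty]
  | insert e E he ih =>
    rw [bernExp_insert p he, bernExp_insert p₁ he, ← ih, ← ih]
    simp only [bernExp_insert p₂ he, Finset.insert_union, Finset.union_insert,
      Finset.insert_idem, bernExp_add, bernExp_const_mul]
    rw [show p = 1 - (1 - p₁) * (1 - p₂) by linarith]
    ring

end BernoulliSubset

section BernoulliEvents

variable {α : Type*} {p : ℝ} {E : Finset α} {P Q : Finset α → Prop}

lemma bernProb_mono (hp : p ∈ Set.Icc (0 : ℝ) 1) (h : ∀ s ⊆ E, P s → Q s) :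
    bernProb p E P ≤ bernProb p E Q :=
  bernExp_mono hp fun s hs => by
    split_ifs with hP hQ hQ
    exacts [le_rfl, absurd (h s hs hP) hQ, zero_le_one, le_rfl]

lemma bernProb_not (p : ℝ) (E : Finset α) (P : Finset α → Prop) :
    bernProb p E (fun s => ¬ P s) = 1 - bernProb p E P := by
  rw [eq_sub_iff_add_eq, bernProb, bernProb, ← bernExp_add]
  refine (bernExp_congr fun s _ => ?_).trans (bernExp_const p E 1)
  by_cases h : P s <;> simp [h]

lemma bernProb_and_not (p : ℝ) (E : Finset α) (P Q : Finset α → Prop) :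
    bernProb p E (fun s => P s ∧ ¬ Q s) =
      bernProb p E P - bernProb p E (fun s => P s ∧ Q s) := by
  rw [bernProb, bernProb, bernProb, ← bernExp_sub]
  exact bernExp_congr fun s _ => by by_cases hP : P s <;> by_cases hQ : Q s <;> simp [hP, hQ]

lemma bernProb_nonneg (hp : p ∈ Set.Icc (0 : ℝ) 1) (E : Finset α) (P : Finset α → Prop) :
    0 ≤ bernProb p E P := by
  refine le_of_eq_of_le (bernExp_const p E 0).symm (bernExp_mono hp fun s _ => ?_)
  positivity

lemma bernProb_le_one (hp : p ∈ Set.Icc (0 : ℝ) 1) (E : Finset α) (P : Finset α → Prop) :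
    bernProb p E P ≤ 1 := by
  refine le_of_le_of_eq (bernExp_mono hp fun s _ => ?_) (bernExp_const p E 1)
  split_ifs <;> norm_num

lemma bernProb_or_le (hp : p ∈ Set.Icc (0 : ℝ) 1) (E : Finset α) (P Q : Finset α → Prop) :
    bernProb p E (fun s => P s ∨ Q s) ≤ bernProb p E P + bernProb p E Q := by
  rw [bernProb, bernProb, bernProb, ← bernExp_add]
  exact bernExp_mono hp fun s _ => by by_cases hP : P s <;> by_cases hQ : Q s <;> simp [hP, hQ]

lemma bernProb_exists_le {ι : Type*} (hp : p ∈ Set.Icc (0 : ℝ) 1) (E : Finset α) (I : Finset ι)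
    (P : ι → Finset α → Prop) :
    bernProb p E (fun s => ∃ i ∈ I, P i s) ≤ ∑ i ∈ I, bernProb p E (P i) := by
  simp only [bernProb, ← bernExp_sum]
  refine bernExp_mono hp fun s _ => ?_
  have hnonneg : ∀ i ∈ I, (0 : ℝ) ≤ if P i s then 1 else 0 := fun i _ => by positivity
  split_ifs with h
  · obtain ⟨i, hi, hPi⟩ := h
    simpa [hPi] using Finset.single_le_sum hnonneg hi
  · exact Finset.sum_nonneg hnonneg

lemma bernProb_mem (p : ℝ) {e : α} (he : e ∈ E) : bernProb p E (fun s => e ∈ s) = p := by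
  have hpos : bernProb p (E.erase e) (fun s => e ∈ insert e s) = 1 := by
    simp [bernProb, bernExp_const]
  have hneg : bernProb p (E.erase e) (fun s => e ∈ s) = 0 := by
    rw [bernProb, bernExp_congr (g := fun _ => 0), bernExp_const]
    exact fun s hs => if_neg fun h => Finset.notMem_erase e E (hs h)
  rw [← Finset.insert_erase he, bernProb, bernExp_insert p (Finset.notMem_erase e E)]
  change p * bernProb _ _ _ + (1 - p) * bernProb _ _ _ = p
  rw [hpos, hneg]
  ring

end BernoulliEvents

section Independence

variable {α β ι : Type*} [DecidableEq α] {D D' : Finset α}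

/-- `f` depends only on the trace of its argument on `D`. With `β = Prop` this says that the event
`f` is determined by the elements of `D`. -/
def DependsOnlyOn (f : Finset α → β) (D : Finset α) : Prop :=
  ∀ ⦃s t⦄, s ∩ D = t ∩ D → f s = f t

lemma DependsOnlyOn.mono {f : Finset α → β} (h : DependsOnlyOn f D) (hD : D ⊆ D') :
    DependsOnlyOn f D' := fun s t hst => h <| by
  simpa [Finset.inter_assoc, Finset.inter_eq_right.2 hD] using congrArg (· ∩ D) hst

lemma DependsOnlyOn.comp {γ : Type*} {f : Finset α → β} (h : DependsOnlyOn f D) (g : β → γ) :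
    DependsOnlyOn (fun s => g (f s)) D := fun _ _ hst => congrArg g (h hst)

lemma DependsOnlyOn.comp₂ {γ δ : Type*} {f : Finset α → β} {f' : Finset α → γ}
    (h : DependsOnlyOn f D) (h' : DependsOnlyOn f' D) (g : β → γ → δ) :
    DependsOnlyOn (fun s => g (f s) (f' s)) D := fun _ _ hst => congrArg₂ g (h hst) (h' hst)

lemma DependsOnlyOn.bex {I : Finset ι} {P : ι → Finset α → Prop}
    (h : ∀ i ∈ I, DependsOnlyOn (P i) D) : DependsOnlyOn (fun s => ∃ i ∈ I, P i s) D :=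
  fun _ _ hst => propext <| exists_congr fun i =>
    and_congr_right fun hi => iff_of_eq (h i hi hst)

lemma DependsOnlyOn.ball {I : Finset ι} {P : ι → Finset α → Prop}
    (h : ∀ i ∈ I, DependsOnlyOn (P i) D) : DependsOnlyOn (fun s => ∀ i ∈ I, P i s) D :=
  fun _ _ hst => propext <| forall₂_congr fun i hi => iff_of_eq (h i hi hst)

lemma dependsOnlyOn_mem {e : α} (he : e ∈ D) : DependsOnlyOn (fun s : Finset α => e ∈ s) D :=
  fun s t hst => by simpa [he] using congrArg (e ∈ ·) hst

lemma dependsOnlyOn_subset {P : Finset α} (hP : P ⊆ D) :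
    DependsOnlyOn (fun s : Finset α => P ⊆ s) D :=
  DependsOnlyOn.ball fun _ he => dependsOnlyOn_mem (hP he)

lemma DependsOnlyOn.comp_insert {f : Finset α → β} (h : DependsOnlyOn f D) (e : α) :
    DependsOnlyOn (fun s => f (insert e s)) D := fun s t hst => h <| by
  by_cases he : e ∈ D
  · rw [Finset.insert_inter_of_mem he, Finset.insert_inter_of_mem he, hst]
  · rw [Finset.insert_inter_of_notMem he, Finset.insert_inter_of_notMem he, hst]

lemma DependsOnlyOn.apply_insert {f : Finset α → β} (h : DependsOnlyOn f D) {e : α} (he : e ∉ D)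
    (s : Finset α) : f (insert e s) = f s :=
  h (Finset.insert_inter_of_notMem he)

lemma bernExp_mul (p : ℝ) (E : Finset α) {f g : Finset α → ℝ} (hf : DependsOnlyOn f D)
    (hg : DependsOnlyOn g D') (hD : Disjoint D D') :
    bernExp p E (fun s => f s * g s) = bernExp p E f * bernExp p E g := by
  induction E using Finset.induction_on generalizing f g with
  | empty => simp [bernExp_empty]
  | insert e E he ih =>
    simp only [bernExp_insert p he]
    rw [ih hf hg, ih (hf.comp_insert e) (hg.comp_insert e)]
    by_cases heD : e ∈ D
    · simp only [hg.apply_insert (Finset.disjoint_left.1 hD heD)]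
      ring
    · simp only [hf.apply_insert heD]
      ring

lemma bernProb_and (p : ℝ) (E : Finset α) {P Q : Finset α → Prop} (hP : DependsOnlyOn P D)
    (hQ : DependsOnlyOn Q D') (hD : Disjoint D D') :
    bernProb p E (fun s => P s ∧ Q s) = bernProb p E P * bernProb p E Q := by
  rw [bernProb, bernProb, bernProb, ← bernExp_mul p E (hP.comp fun P => if P then 1 else 0)
    (hQ.comp fun Q => if Q then 1 else 0) hD]
  exact bernExp_congr fun s _ => by by_cases hP : P s <;> by_cases hQ : Q s <;> simp [hP, hQ]

lemma bernProb_forall (p : ℝ) (E : Finset α) (I : Finset ι) {P : ι → Finset α → Prop}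
    {D : ι → Finset α} (hP : ∀ i ∈ I, DependsOnlyOn (P i) (D i))
    (hD : (I : Set ι).PairwiseDisjoint D) :
    bernProb p E (fun s => ∀ i ∈ I, P i s) = ∏ i ∈ I, bernProb p E (P i) := by
  induction I using Finset.induction_on with
  | empty => simp [bernProb, bernExp_const]
  | insert i I hi ih =>
    simp only [Finset.forall_mem_insert, Finset.coe_insert] at hP hD ⊢
    rw [Finset.prod_insert hi, ← ih hP.2 (hD.subset (Set.subset_insert _ _))]
    exact bernProb_and p E hP.1
      (DependsOnlyOn.ball fun j hj => (hP.2 j hj).mono (Finset.subset_biUnion_of_mem D hj))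
      ((Finset.disjoint_biUnion_right _ _ _).2 fun j hj => hD (Set.mem_insert _ _)
        (Set.mem_insert_of_mem _ hj) fun hij => hi (hij ▸ hj))

omit [DecidableEq α] in
lemma bernProb_subset (p : ℝ) {E P : Finset α} (hP : P ⊆ E) :
    bernProb p E (fun s => P ⊆ s) = p ^ P.card := by
  have hprod := bernProb_forall p E P (P := fun e s => e ∈ s) (D := fun e => {e})
    (fun e _ => dependsOnlyOn_mem (Finset.mem_singleton_self e))
    (fun e _ e' _ h => Finset.disjoint_singleton.2 h)
  rw [Finset.prod_congr rfl fun e he => bernProb_mem p (hP he), Finset.prod_const] at hprod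
  exact hprod

end Independence

section BoundedDifferences

open MeasureTheory ProbabilityTheory

lemma two_point_exp_le {p : ℝ} (hp : p ∈ Set.Icc (0 : ℝ) 1) (a b : ℝ) :
    p * Real.exp (a - (p * a + (1 - p) * b)) + (1 - p) * Real.exp (b - (p * a + (1 - p) * b)) ≤
      Real.exp ((a - b) ^ 2 / 8) := by
  set μ : Measure ℝ := ENNReal.ofReal p • Measure.dirac a + ENNReal.ofReal (1 - p) • Measure.dirac b
    with hμ
  have hp' : 0 ≤ 1 - p := sub_nonneg.2 hp.2
  have : IsProbabilityMeasure μ := ⟨by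
    simp [hμ, ← ENNReal.ofReal_add hp.1 hp']⟩
  have hint (f : ℝ → ℝ) : ∫ x, f x ∂μ = p * f a + (1 - p) * f b := by
    rw [hμ, integral_add_measure, integral_smul_measure, integral_smul_measure]
    · simp [ENNReal.toReal_ofReal, hp.1, hp']
    · exact (integrable_dirac (by simp)).smul_measure ENNReal.ofReal_ne_top
    · exact (integrable_dirac (by simp)).smul_measure ENNReal.ofReal_ne_top
  have hmem : ∀ᵐ x ∂μ, x ∈ Set.Icc (min a b) (max a b) := by
    rw [hμ, ae_add_measure_iff]
    constructor <;> refine Measure.ae_smul_measure ?_ _ <;> simp [ae_dirac_eq]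
  have h := (hasSubgaussianMGF_of_mem_Icc (X := id) aemeasurable_id hmem).mgf_le 1
  simp only [mgf, id, one_mul, hint] at h
  refine h.trans (Real.exp_le_exp.2 (le_of_eq ?_))
  simp only [NNReal.coe_pow, NNReal.coe_div, coe_nnnorm, Real.norm_eq_abs, NNReal.coe_ofNat,
    div_pow, sq_abs, max_sub_min_eq_abs]
  ring

variable {α : Type*} [DecidableEq α] {p K τ : ℝ} {E : Finset α} {f : Finset α → ℝ}

omit [DecidableEq α] in
lemma bernExp_exp_sub (p : ℝ) (E : Finset α) (f : Finset α → ℝ) (a b : ℝ) :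
    bernExp p E (fun s => Real.exp (f s - b)) =
      Real.exp (a - b) * bernExp p E (fun s => Real.exp (f s - a)) := by
  rw [← bernExp_const_mul]
  refine bernExp_congr fun s _ => ?_
  rw [← Real.exp_add]
  ring_nf

lemma abs_bernExp_insert_sub_le (hp : p ∈ Set.Icc (0 : ℝ) 1) (E : Finset α)
    (hf : ∀ e s, |f (insert e s) - f s| ≤ K) (e : α) :
    |bernExp p E (fun s => f (insert e s)) - bernExp p E f| ≤ K := by
  rw [← bernExp_sub, abs_le]
  constructor
  · rw [← bernExp_const p E (-K)]
    exact bernExp_mono hp fun s _ => (abs_le.1 (hf e s)).1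
  · rw [← bernExp_const p E K]
    exact bernExp_mono hp fun s _ => (abs_le.1 (hf e s)).2

/- Revealing the elements of `E` one at a time, each step multiplies the moment generating function
by a two-point average, to which Hoeffding's lemma applies. -/
lemma bernExp_exp_sub_bernExp_le (hp : p ∈ Set.Icc (0 : ℝ) 1) (E : Finset α)
    (hf : ∀ e s, |f (insert e s) - f s| ≤ K) :
    bernExp p E (fun s => Real.exp (f s - bernExp p E f)) ≤ Real.exp (K ^ 2 / 8 * E.card) := by
  induction E using Finset.induction_on generalizing f with
  | empty => simp [bernExp_empty]
  | insert e E he ih =>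
    have ih₁ := ih (f := fun s => f (insert e s)) fun e' s => by
      rw [Finset.insert_comm]
      exact hf e' (insert e s)
    have ih₀ := ih hf
    have hab := abs_bernExp_insert_sub_le hp E hf e
    simp only [bernExp_insert p he]
    set a := bernExp p E fun s => f (insert e s)
    set b := bernExp p E f
    set m := p * a + (1 - p) * b
    have hp' : 0 ≤ 1 - p := sub_nonneg.2 hp.2
    rw [bernExp_exp_sub p E (fun s => f (insert e s)) a m, bernExp_exp_sub p E f b m]
    calc
      _ ≤ p * (Real.exp (a - m) * Real.exp (K ^ 2 / 8 * E.card)) +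
          (1 - p) * (Real.exp (b - m) * Real.exp (K ^ 2 / 8 * E.card)) := by
        have := hp.1
        gcongr
      _ = (p * Real.exp (a - m) + (1 - p) * Real.exp (b - m)) *
          Real.exp (K ^ 2 / 8 * E.card) := by ring
      _ ≤ Real.exp (K ^ 2 / 8) * Real.exp (K ^ 2 / 8 * E.card) := by
        gcongr
        refine (two_point_exp_le hp a b).trans (Real.exp_le_exp.2 ?_)
        gcongr ?_ / 8
        exact sq_le_sq' (abs_le.1 hab).1 (abs_le.1 hab).2
      _ = Real.exp (K ^ 2 / 8 * (insert e E).card) := by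
        rw [← Real.exp_add, Finset.card_insert_of_notMem he]
        push_cast
        ring_nf

lemma bernProb_upper_tail_le (hp : p ∈ Set.Icc (0 : ℝ) 1) (hf : ∀ e s, |f (insert e s) - f s| ≤ K)
    {l : ℝ} (hl : 0 ≤ l) :
    bernProb p E (fun s => τ ≤ f s - bernExp p E f) ≤
      Real.exp ((l * K) ^ 2 / 8 * E.card - l * τ) := by
  have hmgf := bernExp_exp_sub_bernExp_le (f := fun s => l * f s) (K := l * K) hp E fun e s => by
    rw [← mul_sub, abs_mul, abs_of_nonneg hl]
    exact mul_le_mul_of_nonneg_left (hf e s) hl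
  rw [bernExp_const_mul] at hmgf
  rw [sub_eq_neg_add, Real.exp_add]
  refine le_trans ?_ (mul_le_mul_of_nonneg_left hmgf (Real.exp_nonneg _))
  rw [bernProb, ← bernExp_const_mul]
  refine bernExp_mono hp fun s _ => ?_
  rw [← Real.exp_add]
  split_ifs with h
  · exact Real.one_le_exp (by linarith [mul_le_mul_of_nonneg_left h hl])
  · positivity

/-- **McDiarmid's inequality** for random subsets. The quotient in the exponent is `0` when
`K ^ 2 * E.card = 0`. -/
theorem bernProb_le_abs_sub_bernExp_le (hp : p ∈ Set.Icc (0 : ℝ) 1)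
    (hf : ∀ e s, |f (insert e s) - f s| ≤ K) (hτ : 0 ≤ τ) {N : ℝ} (hN : E.card ≤ N) :
    bernProb p E (fun s => τ ≤ |f s - bernExp p E f|) ≤
      2 * Real.exp (-(2 * τ ^ 2 / (K ^ 2 * N))) := by
  have hN₀ : 0 ≤ N := (Nat.cast_nonneg _).trans hN
  have hupper {g : Finset α → ℝ} (hg : ∀ e s, |g (insert e s) - g s| ≤ K) :
      bernProb p E (fun s => τ ≤ g s - bernExp p E g) ≤
        Real.exp (-(2 * τ ^ 2 / (K ^ 2 * N))) := by
    set l := 4 * τ / (K ^ 2 * N) with hl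
    calc
      _ ≤ Real.exp ((l * K) ^ 2 / 8 * E.card - l * τ) :=
        bernProb_upper_tail_le hp hg (by positivity)
      _ ≤ Real.exp ((l * K) ^ 2 / 8 * N - l * τ) := by gcongr
      _ = _ := by
        rcases eq_or_ne (K ^ 2 * N) 0 with h | h
        · simp [hl, h]
        · have := left_ne_zero_of_mul h
          have := right_ne_zero_of_mul h
          rw [hl]
          field_simp
          ring_nf
  have hneg := hupper (g := fun s => -1 * f s) fun e s => by
    rw [← mul_sub, abs_mul, abs_neg, abs_one, one_mul]
    exact hf e s
  rw [bernExp_const_mul] at hneg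
  calc
    _ ≤ bernProb p E (fun s => τ ≤ f s - bernExp p E f ∨ τ ≤ -1 * f s - -1 * bernExp p E f) :=
      bernProb_mono hp fun s _ h => (le_abs.1 h).imp_right fun h => by linarith
    _ ≤ _ := (bernProb_or_le hp _ _ _).trans (by linarith [hupper hf])

end BoundedDifferences

section Graphs

variable {W : Type*} {G : SimpleGraph W}

lemma isChain_edges_cons_cons {u v w x : W} (h : G.Adj u v) (h' : G.Adj v w) (P : G.Walk w x) :
    List.IsChain (· ≠ ·) (SimpleGraph.Walk.cons h (.cons h' P)).edges ↔
      u ≠ w ∧ List.IsChain (· ≠ ·) (SimpleGraph.Walk.cons h' P).edges := by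
  simp only [SimpleGraph.Walk.edges_cons, List.isChain_cons_cons, Sym2.eq_swap (a := u), ne_eq,
    Sym2.congr_right]

lemma isPath_of_isChain_of_lt_egirth {a b : W} (w : G.Walk a b)
    (hw : List.IsChain (· ≠ ·) w.edges) (hlt : (w.length : ℕ∞) < G.egirth) : w.IsPath := by
  let K : SimpleGraph W := SimpleGraph.fromEdgeSet {e | e ∈ w.edges}
  have hK : ∀ e ∈ w.edges, e ∈ K.edgeSet := fun e he => by
    rw [SimpleGraph.edgeSet_fromEdgeSet]
    exact ⟨he, G.not_isDiag_of_mem_edgeSet (w.edges_subset_edgeSet he)⟩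
  have hedges : ∀ e ∈ K.edgeSet, e ∈ w.edges := fun e he =>
    (SimpleGraph.edgeSet_fromEdgeSet _ ▸ he).1
  have hKG : K ≤ G := SimpleGraph.edgeSet_subset_edgeSet.1 fun e he =>
    w.edges_subset_edgeSet (hedges e he)
  have hacyclic : K.IsAcyclic := fun x c hc => by
    have hcycle := SimpleGraph.egirth_le_length (hc.mapLe hKG)
    have hlen : c.edges.length ≤ w.edges.length := (List.subperm_of_subset hc.edges_nodup
      fun e he => hedges e (c.edges_subset_edgeSet he)).length_le
    rw [SimpleGraph.Walk.length_mapLe] at hcycle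
    rw [SimpleGraph.Walk.length_edges, SimpleGraph.Walk.length_edges] at hlen
    exact (hcycle.trans (by exact_mod_cast hlen)).not_gt hlt
  have hpath := (hacyclic.isPath_iff_isChain (w.transfer K hK)).2 (by simpa using hw)
  rwa [SimpleGraph.Walk.isPath_def, SimpleGraph.Walk.support_transfer,
    ← SimpleGraph.Walk.isPath_def] at hpath

variable [Fintype W]

/-- The set of vertices at graph distance at most `n` from `A`, by analogy with
`Metric.cthickening`. -/
def cthickening (G : SimpleGraph W) (n : ℕ) (A : Finset W) : Finset W :=
  {v | ∃ a ∈ A, ∃ w : G.Walk v a, w.length ≤ n}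

lemma mem_cthickening {n : ℕ} {A : Finset W} {v : W} :
    v ∈ cthickening G n A ↔ ∃ a ∈ A, ∃ w : G.Walk v a, w.length ≤ n := by
  simp [cthickening]

lemma cthickening_zero (A : Finset W) : cthickening G 0 A = A := by
  ext v
  rw [mem_cthickening]
  constructor
  · rintro ⟨a, ha, w, hw⟩
    rwa [SimpleGraph.Walk.eq_of_length_eq_zero (Nat.le_zero.1 hw)]
  · exact fun hv => ⟨v, hv, .nil, le_rfl⟩

lemma cthickening_subset_succ (n : ℕ) (A : Finset W) :
    cthickening G n A ⊆ cthickening G (n + 1) A := fun v hv => by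
  obtain ⟨a, ha, w, hw⟩ := mem_cthickening.1 hv
  exact mem_cthickening.2 ⟨a, ha, w, hw.trans n.le_succ⟩

lemma mem_cthickening_succ_of_adj {n : ℕ} {A : Finset W} {u v : W} (h : G.Adj u v)
    (hv : v ∈ cthickening G n A) : u ∈ cthickening G (n + 1) A := by
  obtain ⟨a, ha, w, hw⟩ := mem_cthickening.1 hv
  exact mem_cthickening.2 ⟨a, ha, .cons h w, Nat.succ_le_succ hw⟩

lemma cthickening_succ_subset [DecidableEq W] (n : ℕ) (A : Finset W) :
    cthickening G (n + 1) A ⊆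
      cthickening G n A ∪ (cthickening G n A).biUnion fun v => G.neighborFinset v := fun v hv => by
  obtain ⟨a, ha, w, hw⟩ := mem_cthickening.1 hv
  cases w with
  | nil => exact Finset.mem_union_left _ (mem_cthickening.2 ⟨v, ha, .nil, n.zero_le⟩)
  | @cons _ u _ h w =>
    exact Finset.mem_union_right _ (Finset.mem_biUnion.2 ⟨u,
      mem_cthickening.2 ⟨a, ha, w, Nat.le_of_succ_le_succ hw⟩,
      (G.mem_neighborFinset u v).2 h.symm⟩)

lemma card_cthickening_le {d : ℕ} (hd : ∀ v, G.degree v ≤ d) (n : ℕ) (A : Finset W) :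
    (cthickening G n A).card ≤ A.card * (d + 1) ^ n := by
  induction n with
  | zero => simp [cthickening_zero]
  | succ n ih =>
    calc
      _ ≤ (cthickening G n A).card + (cthickening G n A).card * d :=
        (Finset.card_le_card (cthickening_succ_subset n A)).trans <|
          (Finset.card_union_le _ _).trans <| Nat.add_le_add_left
            (Finset.card_biUnion_le_card_mul _ _ _ fun v _ => hd v) _
      _ = (cthickening G n A).card * (d + 1) := by ring
      _ ≤ A.card * (d + 1) ^ (n + 1) := by
        rw [pow_succ, ← mul_assoc]
        exact Nat.mul_le_mul_right _ ih

end Graphs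

section Survival

variable {W : Type*} [Fintype W] [DecidableEq W] {G : SimpleGraph W} {s t : Finset (Sym2 W)}
  {k : ℕ} {v w : W}

/-- Some non-backtracking walk of `G` with `k + 1` edges, all of them in `s`, starts with the step
from `v` to `w`. -/
def DartSurvives (G : SimpleGraph W) (s : Finset (Sym2 W)) : ℕ → W → W → Prop
  | 0, v, w => s(v, w) ∈ s
  | k + 1, v, w => s(v, w) ∈ s ∧ ∃ x ∈ (G.neighborFinset w).erase v, DartSurvives G s k w x

/-- Some non-backtracking walk of `G` with `k + 1` edges, all of them in `s`, starts at `v`. -/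
def VertexSurvives (G : SimpleGraph W) (s : Finset (Sym2 W)) (k : ℕ) (v : W) : Prop :=
  ∃ w ∈ G.neighborFinset v, DartSurvives G s k v w

lemma DartSurvives.mem (h : DartSurvives G s k v w) : s(v, w) ∈ s := by
  cases k with
  | zero => exact h
  | succ k => exact h.1

lemma DartSurvives.mono (hst : s ⊆ t) (h : DartSurvives G s k v w) : DartSurvives G t k v w := by
  induction k generalizing v w with
  | zero => exact hst h
  | succ k ih => exact ⟨hst h.1, h.2.imp fun x hx => ⟨hx.1, ih hx.2⟩⟩

lemma VertexSurvives.mono (hst : s ⊆ t) (h : VertexSurvives G s k v) : VertexSurvives G t k v :=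
  h.imp fun _ hw => ⟨hw.1, hw.2.mono hst⟩

lemma DartSurvives.exists_walk (hvw : G.Adj v w) (h : DartSurvives G s k v w) :
    ∃ (x : W) (P : G.Walk w x), P.length = k ∧
      List.IsChain (· ≠ ·) (SimpleGraph.Walk.cons hvw P).edges ∧
      ∀ e ∈ (SimpleGraph.Walk.cons hvw P).edges, e ∈ s := by
  induction k generalizing v w with
  | zero => exact ⟨w, .nil, rfl, by simp, by simpa using h.mem⟩
  | succ k ih =>
    obtain ⟨hmem, y, hy, hsurv⟩ := h
    obtain ⟨hyv, hwy⟩ := Finset.mem_erase.1 hy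
    have hwy := (G.mem_neighborFinset w y).1 hwy
    obtain ⟨x, P, hlen, hchain, hedges⟩ := ih hwy hsurv
    refine ⟨x, .cons hwy P, by simp [hlen],
      (isChain_edges_cons_cons hvw hwy P).2 ⟨hyv.symm, hchain⟩, ?_⟩
    rw [SimpleGraph.Walk.edges_cons]
    exact List.forall_mem_cons.2 ⟨hmem, hedges⟩

lemma dartSurvives_of_isPath (hs : ∀ e ∈ s, e ∈ G.edgeSet) {x : W}
    {hvw : (SimpleGraph.fromEdgeSet (s : Set (Sym2 W))).Adj v w}
    (P : (SimpleGraph.fromEdgeSet (s : Set (Sym2 W))).Walk w x)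
    (hP : (SimpleGraph.Walk.cons hvw P).IsPath) (hk : k ≤ P.length) : DartSurvives G s k v w := by
  induction k generalizing v w with
  | zero => exact ((SimpleGraph.fromEdgeSet_adj _).1 hvw).1
  | succ k ih =>
    cases P with
    | nil => simp at hk
    | @cons _ y _ hwy P =>
      have hwy' : s(w, y) ∈ s := by simpa using hwy.1
      refine ⟨by simpa using hvw.1, y, Finset.mem_erase.2 ⟨?_, ?_⟩,
        ih P hP.of_cons (Nat.le_of_succ_le_succ hk)⟩
      · rintro rfl
        exact ((SimpleGraph.Walk.cons_isPath_iff _ _).1 hP).2 (by simp)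
      · exact (G.mem_neighborFinset w y).2 (hs _ hwy')

/-- The edges that determine `DartSurvives G s k v w`. -/
def dartEdges (G : SimpleGraph W) : ℕ → W → W → Finset (Sym2 W)
  | 0, v, w => {s(v, w)}
  | k + 1, v, w => insert s(v, w) (((G.neighborFinset w).erase v).biUnion (dartEdges G k w))

/-- The edges that determine `VertexSurvives G s k v`. -/
def vertexEdges (G : SimpleGraph W) (k : ℕ) (v : W) : Finset (Sym2 W) :=
  (G.neighborFinset v).biUnion (dartEdges G k v)

lemma mem_dartEdges_self (G : SimpleGraph W) (k : ℕ) (v w : W) : s(v, w) ∈ dartEdges G k v w := by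
  cases k <;> simp [dartEdges]

lemma dependsOnlyOn_dartSurvives (G : SimpleGraph W) (k : ℕ) (v w : W) :
    DependsOnlyOn (fun s => DartSurvives G s k v w) (dartEdges G k v w) := by
  induction k generalizing v w with
  | zero => exact dependsOnlyOn_mem (Finset.mem_singleton_self _)
  | succ k ih =>
    simp only [DartSurvives, dartEdges]
    exact (dependsOnlyOn_mem (Finset.mem_insert_self _ _)).comp₂ (DependsOnlyOn.bex fun x hx =>
      (ih w x).mono ((Finset.subset_biUnion_of_mem (dartEdges G k w) hx).trans
        (Finset.subset_insert _ _))) And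

lemma dependsOnlyOn_vertexSurvives (G : SimpleGraph W) (k : ℕ) (v : W) :
    DependsOnlyOn (fun s => VertexSurvives G s k v) (vertexEdges G k v) :=
  DependsOnlyOn.bex fun w hw =>
    (dependsOnlyOn_dartSurvives G k v w).mono (Finset.subset_biUnion_of_mem (dartEdges G k v) hw)

lemma exists_walk_of_mem_dartEdges {e : Sym2 W} (hvw : G.Adj v w) (he : e ∈ dartEdges G k v w) :
    ∃ (x : W) (P : G.Walk w x), P.length ≤ k ∧
      List.IsChain (· ≠ ·) (SimpleGraph.Walk.cons hvw P).edges ∧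
      e ∈ (SimpleGraph.Walk.cons hvw P).edges := by
  induction k generalizing v w with
  | zero => exact ⟨w, .nil, le_rfl, by simp, by simpa [dartEdges] using he⟩
  | succ k ih =>
    rcases Finset.mem_insert.1 he with rfl | he
    · exact ⟨w, .nil, Nat.zero_le _, by simp, by simp⟩
    · obtain ⟨y, hy, hey⟩ := Finset.mem_biUnion.1 he
      obtain ⟨hyv, hwy⟩ := Finset.mem_erase.1 hy
      have hwy := (G.mem_neighborFinset w y).1 hwy
      obtain ⟨x, P, hlen, hchain, heP⟩ := ih hwy hey
      exact ⟨x, .cons hwy P, Nat.succ_le_succ hlen,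
        (isChain_edges_cons_cons hvw hwy P).2 ⟨hyv.symm, hchain⟩, List.mem_cons_of_mem _ heP⟩

lemma mem_cthickening_of_mem_vertexEdges {e : Sym2 W} (he : e ∈ vertexEdges G k v) {a : W}
    (ha : a ∈ e) : v ∈ cthickening G (k + 1) {a} := by
  obtain ⟨w, hw, he⟩ := Finset.mem_biUnion.1 he
  have hvw := (G.mem_neighborFinset v w).1 hw
  obtain ⟨x, P, hlen, -, heP⟩ := exists_walk_of_mem_dartEdges hvw he
  have hmem : a ∈ (SimpleGraph.Walk.cons hvw P).support := by
    obtain ⟨b, rfl⟩ := ha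
    exact SimpleGraph.Walk.fst_mem_support_of_mem_edges _ heP
  refine mem_cthickening.2 ⟨a, Finset.mem_singleton_self a,
    (SimpleGraph.Walk.cons hvw P).takeUntil a hmem,
    (SimpleGraph.Walk.length_takeUntil_le_length _ hmem).trans (Nat.succ_le_succ hlen)⟩

/- A common edge would close up the two walks that reach it into a short cycle. -/
lemma pairwiseDisjoint_dartEdges (hk : ((2 * k + 2 : ℕ) : ℕ∞) < G.egirth) (v : W) :
    (G.neighborFinset v : Set W).PairwiseDisjoint (dartEdges G k v) := by
  intro w hw w' hw' hne
  rw [Finset.mem_coe, SimpleGraph.mem_neighborFinset] at hw hw'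
  refine Finset.disjoint_left.2 fun e he he' => ?_
  obtain ⟨x, P, hlen, hchain, heP⟩ := exists_walk_of_mem_dartEdges hw he
  obtain ⟨x', P', hlen', hchain', heP'⟩ := exists_walk_of_mem_dartEdges hw' he'
  have hchainQ : List.IsChain (· ≠ ·)
      ((SimpleGraph.Walk.cons hw P).reverse.append (.cons hw' P')).edges := by
    rw [SimpleGraph.Walk.edges_append, SimpleGraph.Walk.edges_reverse, List.isChain_append,
      List.isChain_reverse]
    refine ⟨hchain.imp fun _ _ => Ne.symm, hchain', ?_⟩
    simpa [List.getLast?_reverse] using And.intro hne fun h h' => hne (h'.trans h)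
  have hpath := isPath_of_isChain_of_lt_egirth _ hchainQ <| lt_of_le_of_lt
    (Nat.cast_le.2 (by simp only [SimpleGraph.Walk.length_append, SimpleGraph.Walk.length_reverse,
      SimpleGraph.Walk.length_cons]; omega)) hk
  have hnodup := hpath.isTrail.edges_nodup
  rw [SimpleGraph.Walk.edges_append, SimpleGraph.Walk.edges_reverse] at hnodup
  exact List.disjoint_of_nodup_append hnodup (List.mem_reverse.2 heP) heP'

end Survival

section SurvivalAndComponents

omit [DecidableEq V] in
lemma mem_edgeFinset' {G : SimpleGraph V} {e : Sym2 V} : e ∈ edgeFinset' G ↔ e ∈ G.edgeSet := by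
  simp [edgeFinset']

omit [DecidableEq V] in
lemma mem_compVerts {G : SimpleGraph V} {c : G.ConnectedComponent} {v : V} :
    v ∈ compVerts G c ↔ G.connectedComponentMk v = c := by
  simp [compVerts]

variable {G : SimpleGraph V} {s : Finset (Sym2 V)} {k : ℕ} {v : V}

omit [DecidableEq V] in
lemma fromEdgeSet_le (hs : s ⊆ edgeFinset' G) :
    SimpleGraph.fromEdgeSet (s : Set (Sym2 V)) ≤ G := fun _ _ h =>
  mem_edgeFinset'.1 (hs ((SimpleGraph.fromEdgeSet_adj _).1 h).1)

lemma compVerts_subset_cthickening (hs : s ⊆ edgeFinset' G) (hv : ¬ VertexSurvives G s k v) :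
    compVerts (SimpleGraph.fromEdgeSet (s : Set (Sym2 V)))
      ((SimpleGraph.fromEdgeSet (s : Set (Sym2 V))).connectedComponentMk v) ⊆
        cthickening G k {v} := fun x hx => by
  obtain ⟨P, hP⟩ :=
    (SimpleGraph.ConnectedComponent.exact (mem_compVerts.1 hx)).symm.exists_isPath
  by_contra hxk
  have hlen : k < P.length := not_le.1 fun hlen => hxk <| mem_cthickening.2
    ⟨v, Finset.mem_singleton_self v, (P.mapLe (fromEdgeSet_le hs)).reverse, by simpa using hlen⟩
  cases P with
  | nil => simp at hlen
  | @cons _ w _ hvw P =>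
    exact hv ⟨w, (G.mem_neighborFinset v w).2 (fromEdgeSet_le hs hvw), dartSurvives_of_isPath
      (fun e he => mem_edgeFinset'.1 (hs he)) P hP (Nat.le_of_lt_succ hlen)⟩

lemma VertexSurvives.le_card_compVerts (hk : ((k + 1 : ℕ) : ℕ∞) < G.egirth)
    (hv : VertexSurvives G s k v) :
    k + 2 ≤ (compVerts (SimpleGraph.fromEdgeSet (s : Set (Sym2 V)))
      ((SimpleGraph.fromEdgeSet (s : Set (Sym2 V))).connectedComponentMk v)).card := by
  obtain ⟨w, hw, hsurv⟩ := hv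
  obtain ⟨x, P, hlen, hchain, hedges⟩ := hsurv.exists_walk ((G.mem_neighborFinset v w).1 hw)
  set Q := SimpleGraph.Walk.cons ((G.mem_neighborFinset v w).1 hw) P
  have hQlen : Q.length = k + 1 := congrArg (· + 1) hlen
  have hpath : Q.IsPath := isPath_of_isChain_of_lt_egirth Q hchain (hQlen ▸ hk)
  have htransfer : ∀ e ∈ Q.edges, e ∈ (SimpleGraph.fromEdgeSet (s : Set (Sym2 V))).edgeSet :=
    fun e he => SimpleGraph.edgeSet_fromEdgeSet _ ▸
      ⟨hedges e he, G.not_isDiag_of_mem_edgeSet (Q.edges_subset_edgeSet he)⟩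
  have hcard : Q.support.toFinset.card = k + 2 := by
    rw [List.toFinset_card_of_nodup hpath.support_nodup, SimpleGraph.Walk.length_support, hQlen]
  rw [← hcard]
  refine Finset.card_le_card fun y hy => mem_compVerts.2 ?_
  have hy' : y ∈ (Q.transfer _ htransfer).support := by
    rw [SimpleGraph.Walk.support_transfer]
    exact List.mem_toFinset.1 hy
  exact SimpleGraph.ConnectedComponent.sound
    ((Q.transfer _ htransfer).takeUntil y hy').reachable.symm

end SurvivalAndComponents

section SurvivalProbability

/-- The probability that the subtree below an edge of the infinite `d`-regular tree, percolated
with parameter `p`, has no path of length `k` going away from that edge. -/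
def extinctionProb (p : ℝ) (d : ℕ) : ℕ → ℝ
  | 0 => 0
  | k + 1 => (1 - p + p * extinctionProb p d k) ^ (d - 1)

variable {G : SimpleGraph V} {k d : ℕ} {v w : V}

lemma disjoint_dartEdges_biUnion_erase (hk : ((2 * k + 2 : ℕ) : ℕ∞) < G.egirth)
    (hw : w ∈ G.neighborFinset v) :
    Disjoint (dartEdges G k v w) (((G.neighborFinset v).erase w).biUnion (dartEdges G k v)) :=
  (Finset.disjoint_biUnion_right _ _ _).2 fun _ hx => pairwiseDisjoint_dartEdges hk v hw
    (Finset.mem_of_mem_erase hx) (Finset.ne_of_mem_erase hx).symm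

lemma dependsOnlyOn_forall_not_dartSurvives (G : SimpleGraph V) (k : ℕ) (v : V) (I : Finset V) :
    DependsOnlyOn (fun s => ∀ w ∈ I, ¬ DartSurvives G s k v w) (I.biUnion (dartEdges G k v)) :=
  DependsOnlyOn.ball fun w hw => ((dependsOnlyOn_dartSurvives G k v w).comp Not).mono
    (Finset.subset_biUnion_of_mem (dartEdges G k v) hw)

lemma bernProb_forall_not_dartSurvives (p : ℝ) (hk : ((2 * k + 2 : ℕ) : ℕ∞) < G.egirth)
    {I : Finset V} (hI : I ⊆ G.neighborFinset v) {x : ℝ}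
    (hx : ∀ w ∈ I, bernProb p (edgeFinset' G) (fun s => DartSurvives G s k v w) = x) :
    bernProb p (edgeFinset' G) (fun s => ∀ w ∈ I, ¬ DartSurvives G s k v w) =
      (1 - x) ^ I.card := by
  rw [bernProb_forall p _ I (fun w _ => (dependsOnlyOn_dartSurvives G k v w).comp Not)
    ((pairwiseDisjoint_dartEdges hk v).subset (Finset.coe_subset.2 hI)),
    Finset.prod_congr rfl fun w hw => ?_, Finset.prod_const]
  rw [bernProb_not, hx w hw]

lemma bernProb_dartSurvives (p : ℝ) (hG : G.IsRegularOfDegree d)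
    (hk : ((2 * k : ℕ) : ℕ∞) < G.egirth) (hvw : G.Adj v w) :
    bernProb p (edgeFinset' G) (fun s => DartSurvives G s k v w) =
      p * (1 - extinctionProb p d k) := by
  induction k generalizing v w with
  | zero =>
    simp only [DartSurvives, extinctionProb, sub_zero, mul_one]
    exact bernProb_mem p (mem_edgeFinset'.2 (G.mem_edgeSet.2 hvw))
  | succ k ih =>
    have hv : v ∈ G.neighborFinset w := (G.mem_neighborFinset w v).2 hvw.symm
    have hfail : bernProb p (edgeFinset' G)
        (fun s => ∀ x ∈ (G.neighborFinset w).erase v, ¬ DartSurvives G s k w x) =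
          extinctionProb p d (k + 1) := by
      rw [bernProb_forall_not_dartSurvives p hk (Finset.erase_subset _ _) fun x hx =>
        ih (lt_of_le_of_lt (Nat.cast_le.2 (by omega)) hk)
          ((G.mem_neighborFinset w x).1 (Finset.mem_of_mem_erase hx)),
        Finset.card_erase_of_mem hv, G.card_neighborFinset_eq_degree, hG w, extinctionProb]
      ring
    have hindep := bernProb_and p (edgeFinset' G)
      (dependsOnlyOn_mem (Sym2.eq_swap (a := w) ▸ mem_dartEdges_self G k w v))
      ((dependsOnlyOn_forall_not_dartSurvives G k w _).comp Not)
      (disjoint_dartEdges_biUnion_erase hk hv)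
    rw [bernProb_mem p (mem_edgeFinset'.2 (G.mem_edgeSet.2 hvw)), bernProb_not, hfail] at hindep
    rw [← hindep]
    simp only [DartSurvives, not_forall, not_not, exists_prop]

lemma bernProb_vertexSurvives (p : ℝ) (hG : G.IsRegularOfDegree d)
    (hk : ((2 * k + 2 : ℕ) : ℕ∞) < G.egirth) (v : V) :
    bernProb p (edgeFinset' G) (fun s => VertexSurvives G s k v) =
      1 - (1 - p + p * extinctionProb p d k) ^ d := by
  have hfail := bernProb_forall_not_dartSurvives p hk subset_rfl fun w hw =>
    bernProb_dartSurvives p hG (lt_of_le_of_lt (Nat.cast_le.2 (by omega)) hk)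
      ((G.mem_neighborFinset v w).1 hw)
  rw [G.card_neighborFinset_eq_degree, hG v] at hfail
  rw [show 1 - p + p * extinctionProb p d k = 1 - p * (1 - extinctionProb p d k) by ring, ← hfail,
    ← bernProb_not]
  simp only [VertexSurvives, not_forall, not_not, exists_prop]

lemma bernProb_mem_and_vertexSurvives (p : ℝ) (hG : G.IsRegularOfDegree d)
    (hk : ((2 * k + 2 : ℕ) : ℕ∞) < G.egirth) (hvw : G.Adj v w) :
    bernProb p (edgeFinset' G) (fun s => s(v, w) ∈ s ∧ VertexSurvives G s k v) =
      p - p * extinctionProb p d k * (1 - p + p * extinctionProb p d k) ^ (d - 1) := by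
  have hw : w ∈ G.neighborFinset v := (G.mem_neighborFinset v w).2 hvw
  have hsurv : ∀ x ∈ G.neighborFinset v, bernProb p (edgeFinset' G)
      (fun s => DartSurvives G s k v x) = p * (1 - extinctionProb p d k) := fun x hx =>
    bernProb_dartSurvives p hG (lt_of_le_of_lt (Nat.cast_le.2 (by omega)) hk)
      ((G.mem_neighborFinset v x).1 hx)
  have hothers := bernProb_forall_not_dartSurvives p hk (Finset.erase_subset w _)
    fun x hx => hsurv x (Finset.mem_of_mem_erase hx)
  have hthis : bernProb p (edgeFinset' G) (fun s => s(v, w) ∈ s ∧ ¬ DartSurvives G s k v w) =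
      p * extinctionProb p d k := by
    rw [bernProb_and_not]
    simp only [and_iff_right_of_imp DartSurvives.mem]
    rw [bernProb_mem p (mem_edgeFinset'.2 (G.mem_edgeSet.2 hvw)), hsurv w hw]
    ring
  have hfail := bernProb_and p (edgeFinset' G)
    ((dependsOnlyOn_mem (mem_dartEdges_self G k v w)).comp₂
      ((dependsOnlyOn_dartSurvives G k v w).comp Not) And)
    (dependsOnlyOn_forall_not_dartSurvives G k v _) (disjoint_dartEdges_biUnion_erase hk hw)
  rw [hthis, hothers, Finset.card_erase_of_mem hw, G.card_neighborFinset_eq_degree, hG v] at hfail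
  have hiff (s : Finset (Sym2 V)) : s(v, w) ∈ s ∧ VertexSurvives G s k v ↔
      s(v, w) ∈ s ∧ ¬ ((s(v, w) ∈ s ∧ ¬ DartSurvives G s k v w) ∧
        ∀ x ∈ (G.neighborFinset v).erase w, ¬ DartSurvives G s k v x) := by
    refine and_congr_right fun hmem => ?_
    rw [VertexSurvives, ← Finset.insert_erase hw, Finset.exists_mem_insert]
    simp only [Finset.erase_insert_eq_erase, Finset.erase_idem, hmem, true_and, not_and_or,
      not_not, not_forall, exists_prop]
  simp only [hiff, bernProb_and_not]
  simp only [← and_assoc, and_self]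
  rw [bernProb_mem p (mem_edgeFinset'.2 (G.mem_edgeSet.2 hvw)), hfail]
  ring

end SurvivalProbability

section ExtinctionProbability

variable {d : ℕ} {p q x : ℝ}

/- By strict convexity the graph of `x ↦ (1 - p + p * x) ^ m` lies below the diagonal strictly
between the fixed points `q` and `1`. -/
lemma pow_lt_of_fixedPoint_lt {m : ℕ} (hm : 2 ≤ m) (hp : p ∈ Set.Ioo (0 : ℝ) 1) (hq₀ : 0 ≤ q)
    (hq : q = (1 - p + p * q) ^ m) (hqx : q < x) (hx : x < 1) : (1 - p + p * x) ^ m < x := by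
  have hq₁ : 0 < 1 - q := by linarith
  set t := (x - q) / (1 - q)
  have ht : t * (1 - q) = x - q := div_mul_cancel₀ _ hq₁.ne'
  have ht₀ : 0 < t := div_pos (by linarith) hq₁
  have ht₁ : t < 1 := (div_lt_one hq₁).2 (by linarith)
  have hmem : 0 ≤ 1 - p + p * q := add_nonneg (sub_nonneg.2 hp.2.le) (mul_nonneg hp.1.le hq₀)
  have hconv := (strictConvexOn_pow hm).2 (x := 1 - p + p * q) (y := 1) hmem
    (Set.mem_Ici.2 zero_le_one) (by nlinarith [hp.1]) (sub_pos.2 ht₁) ht₀ (sub_add_cancel 1 t)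
  dsimp only at hconv
  rw [← hq] at hconv
  calc
    (1 - p + p * x) ^ m = ((1 - t) • (1 - p + p * q) + t • 1) ^ m := by
      congr 1
      simp only [smul_eq_mul]
      linear_combination -p * ht
    _ < (1 - t) • q + t • 1 ^ m := hconv
    _ = x := by
      simp only [smul_eq_mul, one_pow]
      linear_combination ht

lemma extinctionProb_mem_Icc (hp : p ∈ Set.Icc (0 : ℝ) 1) (hx₀ : 0 ≤ x)
    (hx : (1 - p + p * x) ^ (d - 1) ≤ x) (k : ℕ) : extinctionProb p d k ∈ Set.Icc 0 x := by
  induction k with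
  | zero => exact ⟨le_rfl, hx₀⟩
  | succ k ih =>
    have hnonneg : 0 ≤ 1 - p + p * extinctionProb p d k :=
      add_nonneg (sub_nonneg.2 hp.2) (mul_nonneg hp.1 ih.1)
    refine ⟨pow_nonneg hnonneg _, le_trans (pow_le_pow_left₀ hnonneg ?_ _) hx⟩
    gcongr
    exacts [hp.1, ih.2]

lemma extinctionProb_nonneg (hp : p ∈ Set.Icc (0 : ℝ) 1) (d k : ℕ) : 0 ≤ extinctionProb p d k :=
  (extinctionProb_mem_Icc hp zero_le_one (by simp) k).1

lemma monotone_extinctionProb (hp : p ∈ Set.Icc (0 : ℝ) 1) (d : ℕ) :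
    Monotone (extinctionProb p d) :=
  monotone_nat_of_le_succ fun k => by
    induction k with
    | zero => exact extinctionProb_nonneg hp d 1
    | succ k ih =>
      refine pow_le_pow_left₀ (add_nonneg (sub_nonneg.2 hp.2)
        (mul_nonneg hp.1 (extinctionProb_nonneg hp d k))) ?_ _
      gcongr
      exact hp.1

theorem tendsto_extinctionProb (hd : 3 ≤ d) (hp : p ∈ Set.Ioo (0 : ℝ) 1)
    (hq : q ∈ Set.Ico (0 : ℝ) 1) (hfix : q = (1 - p + p * q) ^ (d - 1)) :
    Filter.Tendsto (extinctionProb p d) Filter.atTop (nhds q) := by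
  have hmem := extinctionProb_mem_Icc (Set.Ioo_subset_Icc_self hp) hq.1 hfix.ge
  have hlim := tendsto_atTop_ciSup (monotone_extinctionProb (Set.Ioo_subset_Icc_self hp) d)
    ⟨q, Set.forall_mem_range.2 fun k => (hmem k).2⟩
  set l := ⨆ k, extinctionProb p d k
  have hl : l ∈ Set.Icc 0 q := isClosed_Icc.mem_of_tendsto hlim (Filter.Eventually.of_forall hmem)
  have hlfix : l = (1 - p + p * l) ^ (d - 1) :=
    tendsto_nhds_unique (hlim.comp (Filter.tendsto_add_atTop_nat 1))
      (((hlim.const_mul p).const_add (1 - p)).pow (d - 1))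
  rcases hl.2.eq_or_lt with h | h
  · rwa [← h]
  · exact absurd hfix (pow_lt_of_fixedPoint_lt (by omega) hp hl.1 hlfix h hq.2).ne'

/-- The density of vertices from which a long walk starts, when the subtree below an edge is
finite with probability `x`. -/
def survivalDensity (p : ℝ) (d : ℕ) (x : ℝ) : ℝ :=
  1 - (1 - p + p * x) ^ d

/-- The density of `deg v / 2 - 1`, summed over the vertices `v` from which a long walk starts,
when the subtree below an edge is finite with probability `x`. -/
def excessDensity (p : ℝ) (d : ℕ) (x : ℝ) : ℝ :=
  d * (p - p * x * (1 - p + p * x) ^ (d - 1)) / 2 - survivalDensity p d x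

lemma continuous_survivalDensity (d : ℕ) :
    Continuous fun y : ℝ × ℝ => survivalDensity y.1 d y.2 := by
  unfold survivalDensity
  fun_prop

lemma survivalDensity_anti (hp : p ∈ Set.Icc (0 : ℝ) 1) (d : ℕ) {y : ℝ} (hy : 0 ≤ y)
    (hyx : y ≤ x) : survivalDensity p d x ≤ survivalDensity p d y := by
  refine sub_le_sub_left (pow_le_pow_left₀ ?_ ?_ d) 1
  · exact add_nonneg (sub_nonneg.2 hp.2) (mul_nonneg hp.1 hy)
  · gcongr
    exact hp.1

lemma continuous_excessDensity (p : ℝ) (d : ℕ) : Continuous (excessDensity p d) := by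
  unfold excessDensity survivalDensity
  fun_prop

lemma excessDensity_of_fixedPoint (hd : 1 ≤ d) (hq : q = (1 - p + p * q) ^ (d - 1)) :
    excessDensity p d q = 1 / 2 * p * d * (1 - q ^ 2) - (1 - q * (1 - p) - p * q ^ 2) := by
  have hpow : (1 - p + p * q) ^ d = q * (1 - p + p * q) := by
    conv_lhs => rw [← Nat.sub_add_cancel hd, pow_succ, ← hq]
  rw [excessDensity, survivalDensity, hpow, ← hq]
  ring

/- Any `x` slightly larger than `q` is a strict supersolution of the fixed point equation, and hence
remains one for all parameters `p₁` close to `p`. -/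
lemma exists_lt_eventually_survivalDensity_sub_le (hd : 3 ≤ d) (hp : p ∈ Set.Ioo (0 : ℝ) 1)
    (hq : q ∈ Set.Ico (0 : ℝ) 1) (hfix : q = (1 - p + p * q) ^ (d - 1)) {a : ℝ} (ha : 0 < a) :
    ∃ p₁ ∈ Set.Ioo 0 p, ∀ᶠ k in Filter.atTop, survivalDensity p d (extinctionProb p d k) -
      survivalDensity p₁ d (extinctionProb p₁ d k) ≤ a := by
  have hcont₁ : Continuous fun x => survivalDensity p d x :=
    (continuous_survivalDensity d).comp (by fun_prop : Continuous fun x : ℝ => (p, x))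
  set S := survivalDensity p d q
  obtain ⟨x, ⟨hqx, hx⟩, hSx⟩ : ∃ x, x ∈ Set.Ioo q 1 ∧ S - a / 2 < survivalDensity p d x := by
    refine (Filter.Eventually.and (Ioo_mem_nhdsGT hq.2) ?_).exists
    exact ((hcont₁.tendsto q).eventually_const_lt
      (sub_lt_self S (half_pos ha))).filter_mono nhdsWithin_le_nhds
  have hcont₂ : Continuous fun y => survivalDensity y d x :=
    (continuous_survivalDensity d).comp (by fun_prop : Continuous fun y : ℝ => (y, x))
  have hcont₃ : Continuous fun y : ℝ => (1 - y + y * x) ^ (d - 1) := by fun_prop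
  obtain ⟨p₁, hp₁, hfix₁, hSp₁⟩ : ∃ p₁, p₁ ∈ Set.Ioo 0 p ∧
      (1 - p₁ + p₁ * x) ^ (d - 1) < x ∧ S - a / 2 < survivalDensity p₁ d x := by
    refine (Filter.Eventually.and (Ioo_mem_nhdsLT hp.1) (Filter.Eventually.filter_mono
      nhdsWithin_le_nhds (Filter.Eventually.and ?_ ?_))).exists
    · exact (hcont₃.tendsto p).eventually_lt_const
        (pow_lt_of_fixedPoint_lt (by omega) hp hq.1 hfix hqx hx)
    · exact (hcont₂.tendsto p).eventually_const_lt hSx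
  have hp₁' : p₁ ∈ Set.Icc (0 : ℝ) 1 := ⟨hp₁.1.le, (hp₁.2.trans hp.2).le⟩
  refine ⟨p₁, hp₁, ?_⟩
  have hlim := (hcont₁.tendsto q).comp (tendsto_extinctionProb hd hp hq hfix)
  filter_upwards [hlim.eventually_lt_const (lt_add_of_pos_right S (half_pos ha))] with k hk
  have hmem := extinctionProb_mem_Icc hp₁' (hq.1.trans hqx.le) hfix₁.le k
  have hanti := survivalDensity_anti hp₁' d hmem.1 hmem.2
  simp only [Function.comp_apply] at hk
  linarith

lemma eventually_abs_excessDensity_sub_le (hd : 3 ≤ d) (hp : p ∈ Set.Ioo (0 : ℝ) 1)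
    (hq : q ∈ Set.Ico (0 : ℝ) 1) (hfix : q = (1 - p + p * q) ^ (d - 1)) {a : ℝ} (ha : 0 < a) :
    ∀ᶠ k in Filter.atTop, |excessDensity p d (extinctionProb p d k) - excessDensity p d q| ≤ a :=
  (((continuous_excessDensity p d).tendsto q).comp
    (tendsto_extinctionProb hd hp hq hfix)).eventually (Metric.closedBall_mem_nhds _ ha)

end ExtinctionProbability

section LocalStatistics

variable {W : Type*} [Fintype W] [DecidableEq W] {G : SimpleGraph W} {s : Finset (Sym2 W)}
  {k d : ℕ} {v : W}

/-- The vertices of `G` at which a non-backtracking walk with `k + 1` edges in `s` starts. They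
approximate the giant component. -/
def survivors (G : SimpleGraph W) (s : Finset (Sym2 W)) (k : ℕ) : Finset W :=
  {v | VertexSurvives G s k v}

/-- The contribution of `v` to the number of edges minus the number of vertices of its component:
half of its degree in the subgraph with edge set `s`, minus one. -/
def vertexExcess (G : SimpleGraph W) (s : Finset (Sym2 W)) (v : W) : ℝ :=
  ({w ∈ G.neighborFinset v | s(v, w) ∈ s}.card : ℝ) / 2 - 1

/-- The sum of `vertexExcess` over the survivors, which approximates the excess of the giant
component. -/
def localExcess (G : SimpleGraph W) (s : Finset (Sym2 W)) (k : ℕ) : ℝ :=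
  ∑ v ∈ survivors G s k, vertexExcess G s v

lemma mem_survivors : v ∈ survivors G s k ↔ VertexSurvives G s k v := by
  simp [survivors]

lemma survivors_mono {t : Finset (Sym2 W)} (h : s ⊆ t) (k : ℕ) :
    survivors G s k ⊆ survivors G t k := fun _ hv =>
  mem_survivors.2 ((mem_survivors.1 hv).mono h)

lemma card_survivors (G : SimpleGraph W) (s : Finset (Sym2 W)) (k : ℕ) :
    ((survivors G s k).card : ℝ) = ∑ v, if VertexSurvives G s k v then 1 else 0 :=
  Finset.natCast_card_filter _ _

lemma localExcess_eq_sum_ite (G : SimpleGraph W) (s : Finset (Sym2 W)) (k : ℕ) :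
    localExcess G s k = ∑ v, if VertexSurvives G s k v then vertexExcess G s v else 0 :=
  Finset.sum_filter _ _

lemma localExcess_eq_sum_darts (G : SimpleGraph W) (s : Finset (Sym2 W)) (k : ℕ) :
    localExcess G s k = ∑ v, (1 / 2 * ∑ w ∈ G.neighborFinset v,
      (if s(v, w) ∈ s ∧ VertexSurvives G s k v then 1 else 0) -
        if VertexSurvives G s k v then 1 else 0) := by
  rw [localExcess_eq_sum_ite]
  refine Finset.sum_congr rfl fun v _ => ?_
  split_ifs with h
  · simp only [vertexExcess, h, and_true, Finset.natCast_card_filter]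
    ring
  · simp [h]

lemma abs_vertexExcess_le (hd : 1 ≤ d) (hG : ∀ v, G.degree v ≤ d) (s : Finset (Sym2 W)) (v : W) :
    |vertexExcess G s v| ≤ d := by
  have hcard : (({w ∈ G.neighborFinset v | s(v, w) ∈ s}.card : ℕ) : ℝ) ≤ d :=
    Nat.cast_le.2 ((Finset.card_filter_le _ _).trans (hG v))
  have hd' : (1 : ℝ) ≤ d := Nat.one_le_cast.2 hd
  rw [vertexExcess, abs_le]
  constructor
  · linarith [Nat.cast_nonneg (α := ℝ) {w ∈ G.neighborFinset v | s(v, w) ∈ s}.card]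
  · linarith

lemma dependsOnlyOn_vertexExcess (G : SimpleGraph W) (k : ℕ) (v : W) :
    DependsOnlyOn (fun s => vertexExcess G s v) (vertexEdges G k v) := fun s t hst => by
  have hfilter : {w ∈ G.neighborFinset v | s(v, w) ∈ s} =
      {w ∈ G.neighborFinset v | s(v, w) ∈ t} := Finset.filter_congr fun w hw =>
    iff_of_eq (dependsOnlyOn_mem
      (Finset.mem_biUnion.2 ⟨w, hw, mem_dartEdges_self G k v w⟩ : s(v, w) ∈ vertexEdges G k v) hst)
  simp only [vertexExcess, hfilter]

lemma abs_sum_insert_sub_le (hG : ∀ v, G.degree v ≤ d) {f : W → Finset (Sym2 W) → ℝ} {B : ℝ}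
    (hB : 0 ≤ B) (hf : ∀ v, DependsOnlyOn (f v) (vertexEdges G k v)) (hfB : ∀ v s, |f v s| ≤ B)
    (e : Sym2 W) (s : Finset (Sym2 W)) :
    |∑ v, f v (insert e s) - ∑ v, f v s| ≤ 2 * B * (d + 1) ^ (k + 1) := by
  obtain ⟨a, ha⟩ : ∃ a, a ∈ e := ⟨_, e.out_fst_mem⟩
  have hcard : ((cthickening G (k + 1) {a}).card : ℝ) ≤ (d + 1) ^ (k + 1) := by
    exact_mod_cast (card_cthickening_le hG (k + 1) {a}).trans_eq (one_mul _)
  rw [← Finset.sum_sub_distrib, ← Finset.sum_subset (Finset.subset_univ (cthickening G (k + 1) {a}))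
    fun v _ hv => by
      rw [(hf v).apply_insert fun he => hv (mem_cthickening_of_mem_vertexEdges he ha), sub_self]]
  calc
    _ ≤ ∑ v ∈ cthickening G (k + 1) {a}, 2 * B := (Finset.abs_sum_le_sum_abs _ _).trans <|
      Finset.sum_le_sum fun v _ => (abs_sub _ _).trans (by linarith [hfB v s, hfB v (insert e s)])
    _ = 2 * B * (cthickening G (k + 1) {a}).card := by rw [Finset.sum_const, nsmul_eq_mul, mul_comm]
    _ ≤ _ := by gcongr

lemma abs_card_survivors_insert_sub_le (hd : 1 ≤ d) (hG : ∀ v, G.degree v ≤ d) (k : ℕ)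
    (e : Sym2 W) (s : Finset (Sym2 W)) :
    |((survivors G (insert e s) k).card : ℝ) - (survivors G s k).card| ≤
      2 * d * (d + 1) ^ (k + 1) := by
  simp only [card_survivors]
  refine abs_sum_insert_sub_le hG (Nat.cast_nonneg d) (fun v =>
    (dependsOnlyOn_vertexSurvives G k v).comp fun P : Prop => if P then (1 : ℝ) else 0) ?_ e s
  intro v s
  have hd' : (1 : ℝ) ≤ d := Nat.one_le_cast.2 hd
  split_ifs <;> simp [hd']

lemma abs_localExcess_insert_sub_le (hd : 1 ≤ d) (hG : ∀ v, G.degree v ≤ d) (k : ℕ)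
    (e : Sym2 W) (s : Finset (Sym2 W)) :
    |localExcess G (insert e s) k - localExcess G s k| ≤ 2 * d * (d + 1) ^ (k + 1) := by
  simp only [localExcess_eq_sum_ite]
  refine abs_sum_insert_sub_le hG (Nat.cast_nonneg d)
    (f := fun v s => if VertexSurvives G s k v then vertexExcess G s v else 0) (fun v =>
    (dependsOnlyOn_vertexSurvives G k v).comp₂ (dependsOnlyOn_vertexExcess G k v)
      fun P x => if P then x else 0) ?_ e s
  intro v s
  split_ifs
  · exact abs_vertexExcess_le hd hG s v
  · simp

end LocalStatistics

section LocalStatisticsOfPercolation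

variable {G : SimpleGraph V} {d k : ℕ} {p : ℝ}

lemma bernExp_card_survivors (p : ℝ) (hG : G.IsRegularOfDegree d)
    (hk : ((2 * k + 2 : ℕ) : ℕ∞) < G.egirth) :
    bernExp p (edgeFinset' G) (fun s => (survivors G s k).card) =
      survivalDensity p d (extinctionProb p d k) * Fintype.card V := by
  simp only [card_survivors, bernExp_sum, bernExp_ite, bernProb_vertexSurvives p hG hk,
    Finset.sum_const, nsmul_eq_mul, Finset.card_univ, survivalDensity]
  ring

lemma bernExp_localExcess (p : ℝ) (hG : G.IsRegularOfDegree d)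
    (hk : ((2 * k + 2 : ℕ) : ℕ∞) < G.egirth) :
    bernExp p (edgeFinset' G) (fun s => localExcess G s k) =
      excessDensity p d (extinctionProb p d k) * Fintype.card V := by
  have hdarts (v : V) : ∑ w ∈ G.neighborFinset v,
      bernProb p (edgeFinset' G) (fun s => s(v, w) ∈ s ∧ VertexSurvives G s k v) =
        d * (p - p * extinctionProb p d k * (1 - p + p * extinctionProb p d k) ^ (d - 1)) := by
    rw [Finset.sum_congr rfl fun w hw =>
      bernProb_mem_and_vertexSurvives p hG hk ((G.mem_neighborFinset v w).1 hw),
      Finset.sum_const, nsmul_eq_mul, G.card_neighborFinset_eq_degree, hG v]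
  simp only [localExcess_eq_sum_darts, bernExp_sum, bernExp_sub, bernExp_const_mul, bernExp_ite,
    hdarts, bernProb_vertexSurvives p hG hk, Finset.sum_const, nsmul_eq_mul, Finset.card_univ,
    excessDensity, survivalDensity]
  ring

omit [DecidableEq V] in
lemma card_edgeFinset'_le (hG : ∀ v, G.degree v ≤ d) :
    (edgeFinset' G).card ≤ Fintype.card V * d := by
  have hdegrees := G.sum_degrees_eq_twice_card_edges
  have hle := Finset.sum_le_card_nsmul Finset.univ (fun v => G.degree v) d fun v _ => hG v
  have hcard : (edgeFinset' G).card = G.edgeFinset.card := by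
    congr 1
    ext e
    rw [mem_edgeFinset', SimpleGraph.mem_edgeFinset]
  simp only [smul_eq_mul, Finset.card_univ] at hle
  omega

lemma bernProb_le_abs_sub_le (hp : p ∈ Set.Icc (0 : ℝ) 1) (hG : ∀ v, G.degree v ≤ d)
    {f : Finset (Sym2 V) → ℝ} {K a : ℝ} (hf : ∀ e s, |f (insert e s) - f s| ≤ K) (ha : 0 ≤ a) :
    bernProb p (edgeFinset' G)
      (fun s => a * Fintype.card V ≤ |f s - bernExp p (edgeFinset' G) f|) ≤
        2 * Real.exp (-(2 * a ^ 2 / (K ^ 2 * d)) * Fintype.card V) := by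
  refine (bernProb_le_abs_sub_bernExp_le hp hf (by positivity)
    (N := Fintype.card V * d) (mod_cast card_edgeFinset'_le hG)).trans_eq ?_
  congr 2
  rcases eq_or_ne (Fintype.card V : ℝ) 0 with hV | hV
  · simp [hV]
  · field_simp

end LocalStatisticsOfPercolation

section Expansion

lemma IsExpander.degree_le {G : SimpleGraph V} {b : ℝ} {d : ℕ} (hG : IsExpander G b d) (v : V) :
    G.degree v ≤ d := by
  rw [← G.card_neighborFinset_eq_degree, SimpleGraph.neighborFinset, ← Set.ncard_eq_toFinset_card']
  exact hG.1 v

variable {G : SimpleGraph V} {F : Finset (Sym2 V)} {S T A B : Finset V} {b x : ℝ} {d j : ℕ}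

lemma cutCard_le (hG : ∀ v, G.degree v ≤ d)
    (hST : ∀ u ∈ S, ∀ v, (G.deleteEdges F).Adj u v → v ∈ T) :
    cutCard G S ≤ F.card + (T \ S).card * d := by
  have hsub : {e ∈ edgeFinset' G | ∃ u ∈ S, ∃ v, v ∉ S ∧ e = s(u, v)} ⊆
      F ∪ (T \ S).biUnion fun v => (G.neighborFinset v).image fun u => s(u, v) := fun e he => by
    obtain ⟨heG, u, hu, v, hv, rfl⟩ := Finset.mem_filter.1 he
    have huv : G.Adj u v := mem_edgeFinset'.1 heG
    refine Finset.mem_union.2 <| or_iff_not_imp_left.2 fun heF => Finset.mem_biUnion.2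
      ⟨v, Finset.mem_sdiff.2 ⟨hST u hu v (SimpleGraph.deleteEdges_adj.2 ⟨huv, heF⟩), hv⟩, ?_⟩
    exact Finset.mem_image.2 ⟨u, (G.mem_neighborFinset v u).2 huv.symm, rfl⟩
  calc
    cutCard G S ≤ _ := Finset.card_le_card hsub
    _ ≤ F.card + _ := Finset.card_union_le _ _
    _ ≤ F.card + (T \ S).card * d := Nat.add_le_add_left
      (Finset.card_biUnion_le_card_mul _ _ _ fun v _ => Finset.card_image_le.trans (hG v)) _

lemma IsExpander.mul_card_le (hG : IsExpander G b d) (hS : (S.card : ℝ) ≤ Fintype.card V / 2)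
    (hsub : S ⊆ T) (hST : ∀ u ∈ S, ∀ v, (G.deleteEdges F).Adj u v → v ∈ T) :
    b * S.card ≤ F.card + (T.card - S.card) * d := by
  have hcut : (cutCard G S : ℝ) ≤ F.card + (T \ S).card * d := by
    exact_mod_cast cutCard_le hG.degree_le hST
  rw [Finset.card_sdiff_of_subset hsub, Nat.cast_sub (Finset.card_le_card hsub)] at hcut
  exact (hG.2 S hS).trans hcut

lemma IsExpander.lt_card_cthickening_mul (hG : IsExpander G b d) (hd : 1 ≤ d) (hb : 0 < b)
    (hx : 0 < x) (hA : x ≤ A.card) (hF : F.card ≤ b * x / 2)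
    (hj : ((cthickening (G.deleteEdges F) j A).card : ℝ) ≤ Fintype.card V / 2) :
    j * (b * x / 2) < (cthickening (G.deleteEdges F) j A).card * d ∧
      x ≤ (cthickening (G.deleteEdges F) j A).card := by
  induction j with
  | zero =>
    have hd' : (0 : ℝ) < d := Nat.cast_pos.2 hd
    rw [cthickening_zero, Nat.cast_zero, zero_mul]
    exact ⟨mul_pos (hx.trans_le hA) hd', hA⟩
  | succ j ih =>
    have hsub := cthickening_subset_succ (G := G.deleteEdges F) j A
    have hcard : ((cthickening (G.deleteEdges F) j A).card : ℝ) ≤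
      (cthickening (G.deleteEdges F) (j + 1) A).card := Nat.cast_le.2 (Finset.card_le_card hsub)
    obtain ⟨ih, hxj⟩ := ih (hcard.trans hj)
    have hgrowth := hG.mul_card_le (hcard.trans hj) hsub fun u hu v huv =>
      mem_cthickening_succ_of_adj huv.symm hu
    have hbx : b * x ≤ b * (cthickening (G.deleteEdges F) j A).card := by gcongr
    push_cast
    exact ⟨by linarith, hxj.trans hcard⟩

lemma IsExpander.half_lt_card_cthickening (hG : IsExpander G b d) (hd : 1 ≤ d) (hb : 0 < b)
    (hx : 0 < x) (hA : x ≤ A.card) (hF : F.card ≤ b * x / 2)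
    (hj : Fintype.card V * d ≤ j * (b * x)) :
    (Fintype.card V : ℝ) / 2 < (cthickening (G.deleteEdges F) j A).card := by
  by_contra! hle
  have hlt := (hG.lt_card_cthickening_mul hd hb hx hA hF hle).1
  have hmul := mul_le_mul_of_nonneg_right hle (Nat.cast_nonneg d)
  linarith

end Expansion

section Sprinkling

/-- No vertex of `A` is connected to a vertex of `B` in `H`. -/
def Separated (H : SimpleGraph V) (A B : Finset V) : Prop :=
  ∀ a ∈ A, ∀ b ∈ B, ¬ H.Reachable a b

omit [Fintype V] [DecidableEq V] in
lemma Separated.anti {H H' : SimpleGraph V} {A B : Finset V} (h : Separated H' A B)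
    (hle : H ≤ H') : Separated H A B := fun a ha b hb hr => h a ha b hb (hr.mono hle)

variable {G : SimpleGraph V} {F : Finset (Sym2 V)} {A B : Finset V} {b x : ℝ} {d j : ℕ}

lemma IsExpander.exists_connecting_edges (hG : IsExpander G b d) (hd : 1 ≤ d) (hb : 0 < b)
    (hx : 0 < x) (hA : x ≤ A.card) (hB : x ≤ B.card) (hF : F.card ≤ b * x / 2)
    (hj : Fintype.card V * d ≤ j * (b * x)) :
    ∃ P ⊆ edgeFinset' G \ F, P.card ≤ 2 * j ∧
      ¬ Separated (SimpleGraph.fromEdgeSet (P : Set (Sym2 V))) A B := by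
  obtain ⟨v, hv⟩ : (cthickening (G.deleteEdges F) j A ∩
      cthickening (G.deleteEdges F) j B).Nonempty := by
    have hcard := Finset.card_union_add_card_inter (cthickening (G.deleteEdges F) j A)
      (cthickening (G.deleteEdges F) j B)
    have hunion := Finset.card_le_univ (cthickening (G.deleteEdges F) j A ∪
      cthickening (G.deleteEdges F) j B)
    have hlt : (Fintype.card V : ℝ) < (cthickening (G.deleteEdges F) j A).card +
        (cthickening (G.deleteEdges F) j B).card := by
      linarith [hG.half_lt_card_cthickening hd hb hx hA hF hj,
        hG.half_lt_card_cthickening hd hb hx hB hF hj]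
    norm_cast at hlt
    exact Finset.card_pos.1 (by omega)
  obtain ⟨hvA, hvB⟩ := Finset.mem_inter.1 hv
  obtain ⟨u, hu, P, hP⟩ := mem_cthickening.1 hvA
  obtain ⟨w, hw, Q, hQ⟩ := mem_cthickening.1 hvB
  let R := P.reverse.append Q
  refine ⟨R.edges.toFinset, fun e he => ?_, (List.toFinset_card_le _).trans ?_, fun hsep => ?_⟩
  · have heR := R.edges_subset_edgeSet (List.mem_toFinset.1 he)
    rw [SimpleGraph.edgeSet_deleteEdges] at heR
    exact Finset.mem_sdiff.2 ⟨mem_edgeFinset'.2 heR.1, heR.2⟩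
  · simp only [R, SimpleGraph.Walk.length_edges, SimpleGraph.Walk.length_append,
      SimpleGraph.Walk.length_reverse]
    omega
  · refine hsep u hu w hw (R.transfer _ fun e he => ?_).reachable
    rw [SimpleGraph.edgeSet_fromEdgeSet]
    exact ⟨List.mem_toFinset.2 he,
      SimpleGraph.not_isDiag_of_mem_edgeSet _ (R.edges_subset_edgeSet he)⟩

/- Disjoint connecting edge sets are found greedily: as long as few edges `F` have been used up,
the expander still provides one that avoids `F`. -/
lemma IsExpander.bernProb_separated_sdiff_le (hG : IsExpander G b d) (hd : 1 ≤ d) (hb : 0 < b)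
    (hx : 0 < x) (hA : x ≤ A.card) (hB : x ≤ B.card) (hj : Fintype.card V * d ≤ j * (b * x))
    {p : ℝ} (hp : p ∈ Set.Icc (0 : ℝ) 1) (m : ℕ) (hF : F.card + m * (2 * j) ≤ b * x / 2) :
    bernProb p (edgeFinset' G)
      (fun t => Separated (SimpleGraph.fromEdgeSet ((t \ F : Finset _) : Set (Sym2 V))) A B) ≤
        (1 - p ^ (2 * j)) ^ m := by
  induction m generalizing F with
  | zero => exact (bernProb_le_one hp _ _).trans_eq (pow_zero _).symm
  | succ m ih =>
    push_cast at hF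
    obtain ⟨P, hP, hPj, hPsep⟩ := hG.exists_connecting_edges (F := F) hd hb hx hA hB
      (by nlinarith [show (0 : ℝ) ≤ m * (2 * j) by positivity]) hj
    have hcard : ((F ∪ P).card : ℝ) ≤ F.card + 2 * j := by
      exact_mod_cast (Finset.card_union_le F P).trans (Nat.add_le_add_left hPj _)
    have hsubset : bernProb p (edgeFinset' G) (fun t => ¬ P ⊆ t) ≤ 1 - p ^ (2 * j) := by
      rw [bernProb_not, bernProb_subset p (hP.trans Finset.sdiff_subset)]
      exact sub_le_sub_left (pow_le_pow_of_le_one hp.1 hp.2 hPj) 1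
    have hind : DependsOnlyOn (fun t : Finset (Sym2 V) => t \ (F ∪ P)) (F ∪ P)ᶜ :=
      fun s t hst => by simpa only [Finset.sdiff_eq_inter_compl] using hst
    calc
      _ ≤ bernProb p (edgeFinset' G) (fun t => ¬ P ⊆ t ∧ Separated
          (SimpleGraph.fromEdgeSet ((t \ (F ∪ P) : Finset _) : Set (Sym2 V))) A B) :=
        bernProb_mono hp fun t _ h =>
          ⟨fun hPt => hPsep <| h.anti <| SimpleGraph.fromEdgeSet_mono <| Finset.coe_subset.2
            fun e he => Finset.mem_sdiff.2 ⟨hPt he, (Finset.mem_sdiff.1 (hP he)).2⟩,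
          h.anti <| SimpleGraph.fromEdgeSet_mono <| Finset.coe_subset.2 <|
            Finset.sdiff_subset_sdiff le_rfl Finset.subset_union_left⟩
      _ = bernProb p (edgeFinset' G) (fun t => ¬ P ⊆ t) * _ :=
        bernProb_and p _ (D := P) (D' := (F ∪ P)ᶜ)
          ((dependsOnlyOn_subset subset_rfl).comp Not)
          (hind.comp fun t => Separated (SimpleGraph.fromEdgeSet (t : Set (Sym2 V))) A B)
          (disjoint_compl_right.mono_left Finset.subset_union_right)
      _ ≤ (1 - p ^ (2 * j)) * (1 - p ^ (2 * j)) ^ m :=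
        mul_le_mul hsubset (ih (by linarith)) (bernProb_nonneg hp _ _)
          (sub_nonneg.2 (pow_le_one₀ hp.1 hp.2))
      _ = (1 - p ^ (2 * j)) ^ (m + 1) := (pow_succ' _ _).symm

end Sprinkling

section Splits

/-- The components of `H` that have at least `k` vertices. -/
def bigComps (H : SimpleGraph V) (k : ℕ) : Finset H.ConnectedComponent :=
  {c | k ≤ (compVerts H c).card}

/-- The vertices of the components in `Q`. -/
def unionComps {H : SimpleGraph V} (Q : Finset H.ConnectedComponent) : Finset V :=
  {v | H.connectedComponentMk v ∈ Q}

/-- The big components of `H` split into two parts with at least `x` vertices each that are not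
connected in `H'`. -/
def BigSplit (H H' : SimpleGraph V) (k : ℕ) (x : ℝ) : Prop :=
  ∃ Q ⊆ bigComps H k, x ≤ (unionComps Q).card ∧ x ≤ (unionComps (bigComps H k \ Q)).card ∧
    Separated H' (unionComps Q) (unionComps (bigComps H k \ Q))

lemma mem_bigComps {H : SimpleGraph V} {k : ℕ} {c : H.ConnectedComponent} :
    c ∈ bigComps H k ↔ k ≤ (compVerts H c).card := by
  simp [bigComps]

lemma card_bigComps_mul_le (H : SimpleGraph V) (k : ℕ) :
    (bigComps H k).card * k ≤ Fintype.card V := by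
  have hdisj : (bigComps H k : Set H.ConnectedComponent).PairwiseDisjoint (compVerts H) :=
    fun c _ c' _ hne => Finset.disjoint_left.2 fun v hv hv' =>
      hne ((mem_compVerts.1 hv).symm.trans (mem_compVerts.1 hv'))
  calc
    (bigComps H k).card * k ≤ ∑ c ∈ bigComps H k, (compVerts H c).card :=
      Finset.card_nsmul_le_sum _ _ k fun c hc => mem_bigComps.1 hc
    _ = ((bigComps H k).biUnion (compVerts H)).card := (Finset.card_biUnion hdisj).symm
    _ ≤ Fintype.card V := Finset.card_le_univ _

lemma IsExpander.bernProb_bigSplit_le {G : SimpleGraph V} {b x p : ℝ} {d j m : ℕ}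
    (hG : IsExpander G b d) (hd : 1 ≤ d) (hb : 0 < b) (hx : 0 < x)
    (hj : Fintype.card V * d ≤ j * (b * x)) (hp : p ∈ Set.Icc (0 : ℝ) 1)
    (hm : m * (2 * j) ≤ b * x / 2) (H : SimpleGraph V) (k : ℕ) :
    bernProb p (edgeFinset' G)
      (fun t => BigSplit H (H ⊔ SimpleGraph.fromEdgeSet (t : Set (Sym2 V))) k x) ≤
        2 ^ (bigComps H k).card * (1 - p ^ (2 * j)) ^ m := by
  let I := {Q ∈ (bigComps H k).powerset |
    x ≤ (unionComps Q).card ∧ x ≤ (unionComps (bigComps H k \ Q)).card}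
  calc
    _ ≤ bernProb p (edgeFinset' G) (fun t => ∃ Q ∈ I, Separated
        (SimpleGraph.fromEdgeSet (t : Set (Sym2 V))) (unionComps Q)
          (unionComps (bigComps H k \ Q))) :=
      bernProb_mono hp fun t _ ⟨Q, hQ, hQx, hQx', hsep⟩ =>
        ⟨Q, Finset.mem_filter.2 ⟨Finset.mem_powerset.2 hQ, hQx, hQx'⟩, hsep.anti le_sup_right⟩
    _ ≤ ∑ Q ∈ I, _ := bernProb_exists_le hp _ _ _
    _ ≤ ∑ _Q ∈ I, (1 - p ^ (2 * j)) ^ m := Finset.sum_le_sum fun Q hQ => by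
      obtain ⟨-, hQx, hQx'⟩ := Finset.mem_filter.1 hQ
      simpa using hG.bernProb_separated_sdiff_le hd hb hx hQx hQx' hj hp m (F := ∅) (by simpa)
    _ ≤ 2 ^ (bigComps H k).card * (1 - p ^ (2 * j)) ^ m := by
      have hI : (I.card : ℝ) ≤ 2 ^ (bigComps H k).card := by
        exact_mod_cast (Finset.card_filter_le _ _).trans_eq (Finset.card_powerset _)
      rw [Finset.sum_const, nsmul_eq_mul]
      exact mul_le_mul_of_nonneg_right hI
        (pow_nonneg (sub_nonneg.2 (pow_le_one₀ hp.1 hp.2)) m)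

end Splits

section LargestComponent

variable {H H' : SimpleGraph V} {γ : H.ConnectedComponent} {B X : Finset V} {D e M x : ℝ} {k : ℕ}

omit [DecidableEq V] in
lemma mem_unionComps {Q : Finset H.ConnectedComponent} {v : V} :
    v ∈ unionComps Q ↔ H.connectedComponentMk v ∈ Q := by
  simp [unionComps]

/- Adding the components one at a time to an empty collection, the part of `B` that is covered jumps
from less than `D` to more than `#B - D`, so `B` is essentially covered by one component. -/
lemma card_lt_of_forall_card_inter_lt (hγ : IsLargestComp H γ) (hD : 0 < D)
    (hB : ∀ Q : Finset H.ConnectedComponent,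
      ((B ∩ unionComps Q).card : ℝ) < D ∨ ((B \ unionComps Q).card : ℝ) < D) :
    (B.card : ℝ) < 2 * D + (compVerts H γ).card := by
  have key (Q : Finset H.ConnectedComponent) : ((B ∩ unionComps Q).card : ℝ) < D ∨
      (B.card : ℝ) < 2 * D + (compVerts H γ).card := by
    induction Q using Finset.induction_on with
    | empty => exact Or.inl (by simpa [unionComps] using hD)
    | insert c Q _ ih =>
      refine ih.elim (fun ih => (hB (insert c Q)).imp id fun hc => ?_) Or.inr
      have hcover : B ⊆ B ∩ unionComps Q ∪ compVerts H c ∪ B \ unionComps (insert c Q) :=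
        fun v hv => by
          simp only [Finset.mem_union, Finset.mem_inter, Finset.mem_sdiff, mem_unionComps,
            mem_compVerts, Finset.mem_insert, hv]
          tauto
      have hcard : (B.card : ℝ) ≤ (B ∩ unionComps Q).card + (compVerts H γ).card +
          (B \ unionComps (insert c Q)).card := by
        exact_mod_cast (Finset.card_le_card hcover).trans <| (Finset.card_union_le _ _).trans <|
          Nat.add_le_add_right ((Finset.card_union_le _ _).trans (Nat.add_le_add_left (hγ c) _)) _
      linarith
  refine (key Finset.univ).elim (fun h => ?_) id
  have huniv : B ∩ unionComps (H := H) Finset.univ = B := by simp [unionComps]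
  rw [huniv] at h
  linarith [Nat.cast_nonneg (α := ℝ) (compVerts H γ).card]

lemma card_compVerts_symmDiff_le (hγ : IsLargestComp H γ) (hD : 0 < D) (hM : 0 ≤ M)
    (hB : ∀ Q : Finset H.ConnectedComponent,
      ((B ∩ unionComps Q).card : ℝ) < D ∨ ((B \ unionComps Q).card : ℝ) < D)
    (hX : ((X \ B).card : ℝ) ≤ e) (hγX : ((compVerts H γ).card : ℝ) ≤ M ∨ compVerts H γ ⊆ X) :
    ((compVerts H γ ∆ X).card : ℝ) ≤ 3 * D + 2 * e + 2 * M := by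
  have hsymm : ((compVerts H γ ∆ X).card : ℝ) ≤ (compVerts H γ \ X).card +
      (X \ compVerts H γ).card := by
    exact_mod_cast Finset.card_union_le _ _
  have hγ_sdiff : ((compVerts H γ \ X).card : ℝ) ≤ M := hγX.elim
    (fun h => (Nat.cast_le.2 (Finset.card_le_card Finset.sdiff_subset)).trans h)
    (fun h => by simpa [Finset.sdiff_eq_empty_iff_subset.2 h] using hM)
  have hsingleton : unionComps {γ} = compVerts H γ := by
    ext v
    simp [mem_unionComps, mem_compVerts]
  rcases hsingleton ▸ hB {γ} with h | h
  · have hγ_card : ((compVerts H γ).card : ℝ) ≤ M + e + D := hγX.elim (fun h => by linarith)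
      fun hsub => by
        have : compVerts H γ ⊆ X \ B ∪ B ∩ compVerts H γ := fun v hv => by
          by_cases hvB : v ∈ B <;> simp [hv, hvB, hsub hv]
        have : ((compVerts H γ).card : ℝ) ≤ (X \ B).card + (B ∩ compVerts H γ).card := by
          exact_mod_cast (Finset.card_le_card this).trans (Finset.card_union_le _ _)
        linarith
    have hX_sdiff : ((X \ compVerts H γ).card : ℝ) ≤ (X \ B).card + B.card := by
      exact_mod_cast (Finset.card_le_card (Finset.sdiff_subset.trans le_sdiff_sup)).trans
        (Finset.card_union_le _ _)
    linarith [card_lt_of_forall_card_inter_lt hγ hD hB]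
  · have hX_sdiff : ((X \ compVerts H γ).card : ℝ) ≤ (X \ B).card + (B \ compVerts H γ).card := by
      exact_mod_cast (Finset.card_le_card (sdiff_triangle X B _)).trans (Finset.card_union_le _ _)
    linarith

lemma card_lt_of_not_bigSplit (hle : H ≤ H') (h : ¬ BigSplit H H' k x)
    (Q : Finset H'.ConnectedComponent) :
    ((unionComps (bigComps H k) ∩ unionComps Q).card : ℝ) < x ∨
      ((unionComps (bigComps H k) \ unionComps Q).card : ℝ) < x := by
  by_contra! hcard
  let Q₀ := {c ∈ bigComps H k | c.map (SimpleGraph.Hom.ofLE hle) ∈ Q}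
  have hinter : unionComps Q₀ = unionComps (bigComps H k) ∩ unionComps Q := by
    ext v
    simp [Q₀, mem_unionComps]
  have hsdiff : unionComps (bigComps H k \ Q₀) = unionComps (bigComps H k) \ unionComps Q := by
    ext v
    simp +contextual [Q₀, mem_unionComps]
  refine h ⟨Q₀, Finset.filter_subset _ _, hinter ▸ hcard.1, hsdiff ▸ hcard.2, ?_⟩
  rw [hinter, hsdiff]
  intro a ha b hb hab
  refine (Finset.mem_sdiff.1 hb).2 (mem_unionComps.2 ?_)
  exact SimpleGraph.ConnectedComponent.eq.2 hab ▸ mem_unionComps.1 (Finset.mem_inter.1 ha).2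

end LargestComponent

section ComponentExcess

lemma degree_eq_card_compEdges {H : SimpleGraph V} {v : V} :
    H.degree v = {e ∈ compEdges H (H.connectedComponentMk v) | v ∈ e}.card := by
  rw [← H.card_neighborFinset_eq_degree, ← Finset.card_image_of_injective _
    (fun _ _ => Sym2.congr_right.1 : Function.Injective fun w => s(v, w))]
  congr 1
  ext e
  simp only [compEdges, Finset.mem_image, SimpleGraph.mem_neighborFinset, Finset.mem_filter,
    mem_edgeFinset']
  constructor
  · rintro ⟨w, hw, rfl⟩
    refine ⟨⟨hw, fun u hu => ?_⟩, Sym2.mem_mk_left _ _⟩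
    rcases Sym2.mem_iff.1 hu with rfl | rfl
    exacts [rfl, SimpleGraph.ConnectedComponent.eq.2 hw.symm.reachable]
  · rintro ⟨⟨he, -⟩, w, rfl⟩
    exact ⟨w, he, rfl⟩

lemma sum_degree_compVerts (H : SimpleGraph V) (c : H.ConnectedComponent) :
    ∑ v ∈ compVerts H c, H.degree v = 2 * (compEdges H c).card := by
  have hends : ∀ e ∈ compEdges H c, {v ∈ compVerts H c | v ∈ e}.card = 2 := fun e he => by
    obtain ⟨heH, hec⟩ := Finset.mem_filter.1 he
    induction e with
    | h u w =>
      rw [← Finset.card_pair (mem_edgeFinset'.1 heH : H.Adj u w).ne]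
      congr 1
      ext v
      simp only [Finset.mem_filter, mem_compVerts, Finset.mem_insert, Finset.mem_singleton,
        Sym2.mem_iff]
      exact and_iff_right_of_imp fun hv => hec v (Sym2.mem_iff.2 hv)
  calc
    _ = ∑ v ∈ compVerts H c, {e ∈ compEdges H c | v ∈ e}.card :=
      Finset.sum_congr rfl fun v hv => by rw [degree_eq_card_compEdges, mem_compVerts.1 hv]
    _ = ∑ e ∈ compEdges H c, {v ∈ compVerts H c | v ∈ e}.card :=
      Finset.sum_card_bipartiteAbove_eq_sum_card_bipartiteBelow _
    _ = 2 * (compEdges H c).card := by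
      rw [Finset.sum_congr rfl hends, Finset.sum_const, smul_eq_mul, mul_comm]

variable {G : SimpleGraph V} {s u : Finset (Sym2 V)} {d k : ℕ} {x e : ℝ}

lemma degree_fromEdgeSet (hs : s ⊆ edgeFinset' G) (v : V)
    [Fintype ((SimpleGraph.fromEdgeSet (s : Set (Sym2 V))).neighborSet v)] :
    (SimpleGraph.fromEdgeSet (s : Set (Sym2 V))).degree v =
      {w ∈ G.neighborFinset v | s(v, w) ∈ s}.card := by
  rw [← SimpleGraph.card_neighborFinset_eq_degree]
  congr 1
  ext w
  simp only [SimpleGraph.mem_neighborFinset, SimpleGraph.fromEdgeSet_adj, Finset.mem_filter,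
    Finset.mem_coe]
  exact ⟨fun h => ⟨mem_edgeFinset'.1 (hs h.1), h.1⟩, fun h => ⟨h.2, h.1.ne⟩⟩

lemma card_compEdges_sub_card_compVerts (hs : s ⊆ edgeFinset' G)
    (c : (SimpleGraph.fromEdgeSet (s : Set (Sym2 V))).ConnectedComponent) :
    ((compEdges _ c).card : ℝ) - (compVerts _ c).card =
      ∑ v ∈ compVerts _ c, vertexExcess G s v := by
  have hsum := congrArg (Nat.cast (R := ℝ)) (sum_degree_compVerts _ c)
  push_cast [degree_fromEdgeSet hs] at hsum
  simp only [vertexExcess, Finset.sum_sub_distrib, ← Finset.sum_div, hsum, Finset.sum_const,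
    nsmul_eq_mul]
  ring

omit [Fintype V] in
lemma abs_sum_sub_sum_le {f : V → ℝ} {K : ℝ} (hf : ∀ v, |f v| ≤ K) (A B : Finset V) :
    |∑ v ∈ A, f v - ∑ v ∈ B, f v| ≤ K * (A ∆ B).card := by
  have hsum (S : Finset V) : |∑ v ∈ S, f v| ≤ K * S.card :=
    calc
      _ ≤ ∑ v ∈ S, |f v| := Finset.abs_sum_le_sum_abs _ _
      _ ≤ S.card • K := Finset.sum_le_card_nsmul _ _ K fun v _ => hf v
      _ = K * S.card := by rw [nsmul_eq_mul, mul_comm]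
  rw [← Finset.sum_sdiff_sub_sum_sdiff, symmDiff_def, Finset.sup_eq_union,
    Finset.card_union_of_disjoint disjoint_sdiff_sdiff, Nat.cast_add, mul_add]
  exact (abs_sub _ _).trans (add_le_add (hsum _) (hsum _))

lemma card_compVerts_le_or_subset_survivors (hG : ∀ v, G.degree v ≤ d) (hs : s ⊆ edgeFinset' G)
    (c : (SimpleGraph.fromEdgeSet (s : Set (Sym2 V))).ConnectedComponent) :
    (compVerts _ c).card ≤ (d + 1) ^ k ∨ compVerts _ c ⊆ survivors G s k := by
  refine or_iff_not_imp_right.2 fun hc => ?_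
  obtain ⟨v, hv, hvs⟩ := Finset.not_subset.1 hc
  obtain rfl := mem_compVerts.1 hv
  calc
    _ ≤ _ := Finset.card_le_card (compVerts_subset_cthickening hs fun h => hvs (mem_survivors.2 h))
    _ ≤ _ := card_cthickening_le hG k {v}
    _ = _ := by simp

lemma survivors_subset_unionComps_bigComps (hk : ((k + 1 : ℕ) : ℕ∞) < G.egirth) :
    survivors G s k ⊆ unionComps (bigComps (SimpleGraph.fromEdgeSet (s : Set (Sym2 V))) (k + 2)) :=
  fun _ hv => mem_unionComps.2 <| mem_bigComps.2 <| (mem_survivors.1 hv).le_card_compVerts hk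

lemma abs_excess_sub_localExcess_le (hd : 1 ≤ d) (hG : ∀ v, G.degree v ≤ d)
    (hk : ((k + 1 : ℕ) : ℕ∞) < G.egirth) (hsu : s ⊆ u) (hu : u ⊆ edgeFinset' G) (hx : 0 < x)
    (he : ((survivors G u k).card : ℝ) - (survivors G s k).card ≤ e)
    (hsplit : ¬ BigSplit (SimpleGraph.fromEdgeSet (s : Set (Sym2 V)))
      (SimpleGraph.fromEdgeSet (u : Set (Sym2 V))) (k + 2) x)
    {γ : (SimpleGraph.fromEdgeSet (u : Set (Sym2 V))).ConnectedComponent}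
    (hγ : IsLargestComp _ γ) :
    |((compEdges _ γ).card : ℝ) - (compVerts _ γ).card - localExcess G u k| ≤
      d * (3 * x + 2 * e + 2 * ((d : ℝ) + 1) ^ k) := by
  have hsurvivors : ((survivors G u k \
      unionComps (bigComps (SimpleGraph.fromEdgeSet (s : Set (Sym2 V))) (k + 2))).card : ℝ) ≤ e :=
    calc
      _ ≤ ((survivors G u k \ survivors G s k).card : ℝ) := Nat.cast_le.2 <| Finset.card_le_card <|
        Finset.sdiff_subset_sdiff le_rfl (survivors_subset_unionComps_bigComps hk)
      _ = (survivors G u k).card - (survivors G s k).card :=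
        Finset.cast_card_sdiff (survivors_mono hsu k)
      _ ≤ e := he
  rw [card_compEdges_sub_card_compVerts hu, localExcess]
  refine (abs_sum_sub_sum_le (abs_vertexExcess_le hd hG u) _ _).trans ?_
  gcongr
  exact card_compVerts_symmDiff_le hγ hx (by positivity)
    (card_lt_of_not_bigSplit (SimpleGraph.fromEdgeSet_mono (Finset.coe_subset.2 hsu)) hsplit)
    hsurvivors (by exact_mod_cast card_compVerts_le_or_subset_survivors (k := k) hG hu γ)

end ComponentExcess

section Pruning

variable {W : Type*} {H J K : SimpleGraph W} {c : H.ConnectedComponent} {v w : W}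

lemma ncard_support_deleteEdges_pendant_lt [Finite W] (hvw : J.Adj v w)
    (hv : (J.neighborSet v).ncard ≤ 1) :
    (J.deleteEdges {s(v, w)}).support.ncard < J.support.ncard := by
  refine Set.ncard_lt_ncard ⟨SimpleGraph.support_mono (SimpleGraph.deleteEdges_le _), fun h => ?_⟩
  obtain ⟨u, hu⟩ := h ⟨w, hvw⟩
  replace hu := SimpleGraph.deleteEdges_adj.1 hu
  obtain rfl := (Set.ncard_le_one (Set.toFinite _)).1 hv u hu.1 w hvw
  exact hu.2 rfl

lemma le_deleteEdges_pendant [Finite W] (hKJ : K ≤ J) (hvw : J.Adj v w)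
    (hv : (J.neighborSet v).ncard ≤ 1) (hK : ∀ u ∈ K.support, 2 ≤ (K.neighborSet u).ncard) :
    K ≤ J.deleteEdges {s(v, w)} := by
  have hvK : v ∉ K.support := fun h => by
    have : (K.neighborSet v).ncard ≤ (J.neighborSet v).ncard :=
      Set.ncard_le_ncard fun _ hu => hKJ hu
    have := hK v h
    omega
  refine fun x y hxy => SimpleGraph.deleteEdges_adj.2 ⟨hKJ hxy, fun he => hvK ?_⟩
  rcases Sym2.eq_iff.1 (Set.mem_singleton_iff.1 he) with ⟨rfl, -⟩ | ⟨-, rfl⟩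
  exacts [⟨_, hxy⟩, ⟨_, hxy.symm⟩]

lemma exists_potential_decreasing {S : Finset W} (hS : S.Nonempty)
    (hSc : ∀ v ∈ S, H.connectedComponentMk v = c) :
    ∃ D : W → ℕ, ∀ v, H.connectedComponentMk v = c → v ∉ S → ∃ w, H.Adj v w ∧ D w < D v := by
  refine ⟨fun v => sInf {n | ∃ u ∈ S, ∃ w : H.Walk v u, w.length = n}, fun v hv hvS => ?_⟩
  have hne : {n | ∃ u ∈ S, ∃ w : H.Walk v u, w.length = n}.Nonempty := by
    obtain ⟨u, hu⟩ := hS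
    obtain ⟨w⟩ := SimpleGraph.ConnectedComponent.eq.1 (hv.trans (hSc u hu).symm)
    exact ⟨_, u, hu, w, rfl⟩
  obtain ⟨u, hu, w, hw⟩ := Nat.sInf_mem hne
  cases w with
  | nil => exact absurd hu hvS
  | cons h w' =>
    refine ⟨_, h, lt_of_lt_of_eq (Nat.lt_of_le_of_lt (Nat.sInf_le ⟨u, hu, w', rfl⟩) ?_) hw⟩
    rw [SimpleGraph.Walk.length_cons]
    exact Nat.lt_succ_self _

end Pruning

section TwoCore

variable {W : Type} {H : SimpleGraph W} {c : H.ConnectedComponent} {v w : W}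

lemma exists_le_twoCoreComp_adj (h : (twoCoreComp H c).Adj v w) :
    ∃ J ≤ twoCoreComp H c, J.Adj v w ∧ J ≤ H ∧
      (∀ u ∈ J.support, H.connectedComponentMk u = c) ∧
      ∀ u ∈ J.support, 2 ≤ (J.neighborSet u).ncard := by
  obtain ⟨J, hJ, hvw⟩ := SimpleGraph.sSup_adj.1 h
  exact ⟨J, le_sSup hJ, hvw, hJ⟩

lemma two_le_ncard_neighborSet_twoCoreComp [Finite W]
    (hv : v ∈ (twoCoreComp H c).support) :
    2 ≤ ((twoCoreComp H c).neighborSet v).ncard := by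
  obtain ⟨w, hw⟩ := hv
  obtain ⟨J, hle, hvw, -, -, hJ⟩ := exists_le_twoCoreComp_adj hw
  exact (hJ v ⟨w, hvw⟩).trans (Set.ncard_le_ncard fun _ hu => hle hu)

end TwoCore

section TwoCoreExcess

variable {H J K : SimpleGraph V} {c : H.ConnectedComponent}

omit [DecidableEq V] in
lemma ncard_edgeSet (H : SimpleGraph V) : H.edgeSet.ncard = (edgeFinset' H).card := by
  rw [← Set.ncard_coe_finset, edgeFinset', Finset.coe_filter_univ, Set.ofPred_mem_eq]

lemma mem_compEdges_mk {v w : V} :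
    s(v, w) ∈ compEdges H c ↔ H.Adj v w ∧ H.connectedComponentMk v = c := by
  simp only [compEdges, Finset.mem_filter, mem_edgeFinset', SimpleGraph.mem_edgeSet, Sym2.mem_iff,
    forall_eq_or_imp, forall_eq]
  refine and_congr_right fun h => and_iff_left_of_imp fun hv => ?_
  rw [← SimpleGraph.ConnectedComponent.connectedComponentMk_eq_of_adj h, hv]

/-- The connected component `c` of `H`, as a spanning subgraph of `H`. -/
def compGraph (H : SimpleGraph V) (c : H.ConnectedComponent) : SimpleGraph V :=
  SimpleGraph.fromEdgeSet (compEdges H c : Set (Sym2 V))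

lemma compGraph_adj {v w : V} :
    (compGraph H c).Adj v w ↔ H.Adj v w ∧ H.connectedComponentMk v = c := by
  rw [compGraph, SimpleGraph.fromEdgeSet_adj, Finset.mem_coe, mem_compEdges_mk]
  exact and_iff_left_of_imp fun h => h.1.ne

lemma edgeFinset'_compGraph (c : H.ConnectedComponent) :
    edgeFinset' (compGraph H c) = compEdges H c := by
  ext e
  induction e with
  | h v w => rw [mem_edgeFinset', SimpleGraph.mem_edgeSet, compGraph_adj, mem_compEdges_mk]

lemma ncard_support_compGraph_le (c : H.ConnectedComponent) :
    (compGraph H c).support.ncard ≤ (compVerts H c).card := by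
  rw [← Set.ncard_coe_finset]
  exact Set.ncard_le_ncard fun v ⟨w, h⟩ => mem_compVerts.2 (compGraph_adj.1 h).2

lemma twoCoreComp_le_compGraph (c : H.ConnectedComponent) : twoCoreComp H c ≤ compGraph H c := by
  intro v w h
  obtain ⟨J, -, hvw, hJH, hJc, -⟩ := exists_le_twoCoreComp_adj h
  exact compGraph_adj.2 ⟨hJH hvw, hJc v ⟨w, hvw⟩⟩

lemma le_twoCoreComp (hJ : J ≤ compGraph H c)
    (hdeg : ∀ v ∈ J.support, 2 ≤ (J.neighborSet v).ncard) : J ≤ twoCoreComp H c :=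
  le_sSup ⟨fun _ _ h => (compGraph_adj.1 (hJ h)).1,
    fun _ ⟨_, h⟩ => (compGraph_adj.1 (hJ h)).2, hdeg⟩

/- Deleting the edge at a vertex of degree one removes one edge and at least one vertex. -/
lemma ncard_edgeSet_add_ncard_support_twoCoreComp_le (hle : twoCoreComp H c ≤ J)
    (hJ : J ≤ compGraph H c) :
    J.edgeSet.ncard + (twoCoreComp H c).support.ncard ≤
      (twoCoreComp H c).edgeSet.ncard + J.support.ncard := by
  induction hm : J.edgeSet.ncard generalizing J with
  | zero =>
    have := Set.ncard_le_ncard (SimpleGraph.support_mono hle)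
    omega
  | succ m ih =>
    by_cases hdeg : ∀ v ∈ J.support, 2 ≤ (J.neighborSet v).ncard
    · rw [← hm, le_antisymm (le_twoCoreComp hJ hdeg) hle]
    push Not at hdeg
    obtain ⟨v, ⟨w, hvw⟩, hv⟩ := hdeg
    have hv1 : (J.neighborSet v).ncard ≤ 1 := by omega
    have hedges : (J.deleteEdges {s(v, w)}).edgeSet.ncard = m := by
      rw [SimpleGraph.edgeSet_deleteEdges, Set.ncard_sdiff_singleton_of_mem (by exact hvw), hm,
        Nat.add_sub_cancel]
    have := ih
      (le_deleteEdges_pendant hle hvw hv1 fun _ => two_le_ncard_neighborSet_twoCoreComp)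
      ((SimpleGraph.deleteEdges_le _).trans hJ) hedges
    have := ncard_support_deleteEdges_pendant_lt hvw hv1
    omega

/- Each vertex outside `S` is charged the edge that takes it one step closer to `S`. -/
lemma card_compVerts_sdiff_le {S : Finset V} (hS : S.Nonempty)
    (hSc : ∀ v ∈ S, H.connectedComponentMk v = c) (hKS : ∀ v ∈ K.support, v ∈ S) :
    (compVerts H c \ S).card ≤ (compEdges H c \ edgeFinset' K).card := by
  obtain ⟨D, hD⟩ := exists_potential_decreasing hS hSc
  have hcloser : ∀ v ∈ compVerts H c \ S, ∃ w, H.Adj v w ∧ D w < D v := fun v hv =>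
    hD v (mem_compVerts.1 (Finset.mem_sdiff.1 hv).1) (Finset.mem_sdiff.1 hv).2
  choose! f hadj hlt using hcloser
  refine Finset.card_le_card_of_injOn (fun v => s(v, f v)) (fun v hv => ?_) fun v hv v' hv' h => ?_
  · obtain ⟨hvc, hvS⟩ := Finset.mem_sdiff.1 (Finset.mem_coe.1 hv)
    refine Finset.mem_coe.2 (Finset.mem_sdiff.2 ⟨?_, fun h => hvS (hKS v ⟨f v, ?_⟩)⟩)
    · exact mem_compEdges_mk.2 ⟨hadj v hv, mem_compVerts.1 hvc⟩
    · exact mem_edgeFinset'.1 h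
  · rcases Sym2.eq_iff.1 h with ⟨hvv', -⟩ | ⟨rfl, hfv⟩
    · exact hvv'
    · have h₁ := hlt _ hv
      rw [hfv] at h₁
      exact absurd h₁ (hlt _ hv').not_gt

lemma card_compVerts_add_card_edgeFinset'_le {S : Finset V} (hS : S.Nonempty)
    (hSc : ∀ v ∈ S, H.connectedComponentMk v = c) (hK : K ≤ compGraph H c)
    (hKS : ∀ v ∈ K.support, v ∈ S) :
    (compVerts H c).card + (edgeFinset' K).card ≤ (compEdges H c).card + S.card := by
  have hverts := Finset.card_sdiff_add_card_eq_card
    (show S ⊆ compVerts H c from fun v hv => mem_compVerts.2 (hSc v hv))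
  have hedges := Finset.card_sdiff_add_card_eq_card
    (show edgeFinset' K ⊆ compEdges H c from fun e he => by
      rw [← edgeFinset'_compGraph, mem_edgeFinset']
      exact SimpleGraph.edgeSet_mono hK (mem_edgeFinset'.1 he))
  have := card_compVerts_sdiff_le hS hSc hKS
  omega

/- The `+ 1` accounts for the vertex of `c` that stands in for the support of an empty 2-core. -/
lemma card_compVerts_add_ncard_edgeSet_twoCoreComp_le (c : H.ConnectedComponent) :
    (compVerts H c).card + (twoCoreComp H c).edgeSet.ncard ≤
      (compEdges H c).card + ((twoCoreComp H c).support.ncard + 1) := by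
  obtain ⟨r, hr⟩ := c.exists_rep
  have hS : ∀ v ∈ insert r (twoCoreComp H c).support.toFinset, H.connectedComponentMk v = c := by
    intro v hv
    rcases Finset.mem_insert.1 hv with rfl | hv
    · exact hr
    · obtain ⟨w, hw⟩ := Set.mem_toFinset.1 hv
      exact (compGraph_adj.1 (twoCoreComp_le_compGraph c hw)).2
  have hcard := card_compVerts_add_card_edgeFinset'_le (Finset.insert_nonempty _ _) hS
    (twoCoreComp_le_compGraph c) fun v hv => Finset.mem_insert_of_mem (Set.mem_toFinset.2 hv)
  rw [ncard_edgeSet]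
  refine hcard.trans (Nat.add_le_add_left ((Finset.card_insert_le _ _).trans_eq ?_) _)
  rw [Set.ncard_eq_toFinset_card']

lemma abs_twoCoreComp_excess_sub_le (c : H.ConnectedComponent) :
    |(((twoCoreComp H c).edgeSet.ncard : ℝ) - (twoCoreComp H c).support.ncard) -
      ((compEdges H c).card - (compVerts H c).card)| ≤ 1 := by
  have hpruned := ncard_edgeSet_add_ncard_support_twoCoreComp_le (twoCoreComp_le_compGraph c) le_rfl
  rw [ncard_edgeSet, edgeFinset'_compGraph] at hpruned
  have hlower : ((compEdges H c).card : ℝ) + (twoCoreComp H c).support.ncard ≤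
      (twoCoreComp H c).edgeSet.ncard + (compVerts H c).card := by
    exact_mod_cast hpruned.trans (Nat.add_le_add_left (ncard_support_compGraph_le c) _)
  have hupper : ((compVerts H c).card : ℝ) + (twoCoreComp H c).edgeSet.ncard ≤
      (compEdges H c).card + ((twoCoreComp H c).support.ncard + 1) := by
    exact_mod_cast card_compVerts_add_ncard_edgeSet_twoCoreComp_le c
  rw [abs_le]
  constructor <;> linarith

end TwoCoreExcess

section ExponentialBounds

lemma two_pow_mul_one_sub_pow_le {r x : ℝ} {N m : ℕ} (hr : r ∈ Set.Icc (0 : ℝ) 1)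
    (hN : N ≤ r * x / 2) (hm : x ≤ m + 1) :
    2 ^ N * (1 - r) ^ m ≤ 3 * Real.exp (-(r * x / 2)) := by
  have htwo : (2 : ℝ) ≤ Real.exp 1 := by linarith [Real.add_one_le_exp (1 : ℝ)]
  have hthree : Real.exp 1 ≤ 3 := by linarith [Real.exp_one_lt_d9]
  have hr' : 0 ≤ 1 - r := sub_nonneg.2 hr.2
  have hrm : r * x ≤ r * (m + 1) := mul_le_mul_of_nonneg_left hm hr.1
  calc (2 : ℝ) ^ N * (1 - r) ^ m ≤ Real.exp 1 ^ N * Real.exp (-r) ^ m := by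
        gcongr
        exact Real.one_sub_le_exp_neg r
    _ = Real.exp (N - r * m) := by
        rw [← Real.exp_nat_mul, ← Real.exp_nat_mul, ← Real.exp_add]
        ring_nf
    _ ≤ Real.exp (1 + -(r * x / 2)) := Real.exp_le_exp.2 (by linarith [hr.2])
    _ ≤ 3 * Real.exp (-(r * x / 2)) := by
        rw [Real.exp_add]
        gcongr

lemma one_sub_add_mul_exp_le {c C x y n : ℝ} (hc : 0 ≤ c) (hC : 0 ≤ C) (hx : 0 ≤ x)
    (h : y ≤ n → 1 - C * Real.exp (-c * n) ≤ x) :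
    1 - (C + Real.exp (c * y)) * Real.exp (-c * n) ≤ x := by
  rw [add_mul, ← Real.exp_add]
  rcases le_total y n with hyn | hny
  · linarith [h hyn, Real.exp_pos (c * y + -c * n)]
  · have hone : 1 ≤ Real.exp (c * y + -c * n) := Real.one_le_exp (by nlinarith)
    nlinarith [Real.exp_pos (-c * n)]

end ExponentialBounds

section TwoRoundExposure

lemma bernProb_le_of_union {α : Type*} [DecidableEq α] {p p₁ p₂ x : ℝ}
    (hp₁ : p₁ ∈ Set.Icc (0 : ℝ) 1) (hp₂ : p₂ ∈ Set.Icc (0 : ℝ) 1)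
    (h : 1 - p = (1 - p₁) * (1 - p₂)) {E : Finset α} {P A D : Finset α → Prop}
    {B : Finset α → Finset α → Prop}
    (hP : ∀ s ⊆ E, ∀ t ⊆ E, P (s ∪ t) → A (s ∪ t) ∨ D s ∨ B s t)
    (hB : ∀ s, bernProb p₂ E (B s) ≤ x) :
    bernProb p E P ≤ bernProb p E A + bernProb p₁ E D + x := by
  have hcond (s : Finset α) (hs : s ⊆ E) : bernProb p₂ E (fun t => P (s ∪ t)) ≤
      bernProb p₂ E (fun t => A (s ∪ t)) + (if D s then 1 else 0) + x :=
    calc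
      _ ≤ bernProb p₂ E fun t => A (s ∪ t) ∨ D s ∨ B s t := bernProb_mono hp₂ (hP s hs)
      _ ≤ _ := bernProb_or_le hp₂ E _ _
      _ ≤ bernProb p₂ E (fun t => A (s ∪ t)) +
          (bernProb p₂ E (fun _ => D s) + bernProb p₂ E (B s)) :=
        add_le_add_right (bernProb_or_le hp₂ E _ _) _
      _ ≤ _ := by
        rw [add_assoc]
        gcongr
        · rw [bernProb, bernExp_const]
        · exact hB s
  calc bernProb p E P = bernExp p₁ E fun s => bernProb p₂ E fun t => P (s ∪ t) :=
        (bernExp_union h E _).symm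
    _ ≤ bernExp p₁ E fun s =>
          bernProb p₂ E (fun t => A (s ∪ t)) + (if D s then 1 else 0) + x := bernExp_mono hp₁ hcond
    _ = _ := by
        rw [bernExp_add, bernExp_add, bernExp_const, bernExp_ite]
        congr 2
        exact bernExp_union h E fun s => if A s then 1 else 0

lemma exists_sprinkling_parameter {p p₁ : ℝ} (hp : p < 1) (hp₁ : p₁ < p) :
    ∃ p₂ ∈ Set.Ioo (0 : ℝ) 1, 1 - p = (1 - p₁) * (1 - p₂) := by
  have hp₁' : 0 < 1 - p₁ := by linarith
  refine ⟨1 - (1 - p) / (1 - p₁), ⟨?_, ?_⟩, ?_⟩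
  · rw [sub_pos, div_lt_one hp₁']
    linarith
  · have : 0 < (1 - p) / (1 - p₁) := div_pos (by linarith) hp₁'
    linarith
  · rw [sub_sub_cancel, mul_div_cancel₀ _ hp₁'.ne']

end TwoRoundExposure

section Concentration

lemma IsRegularExpander.isRegularOfDegree {G : SimpleGraph V} {b : ℝ} {d : ℕ}
    (hG : IsRegularExpander G b d) : G.IsRegularOfDegree d := fun v => by
  rw [← G.card_neighborFinset_eq_degree, SimpleGraph.neighborFinset, ← Set.ncard_eq_toFinset_card']
  exact hG.2 v

lemma IsExpander.bernProb_bigSplit_le_exp {G : SimpleGraph V} {b δ p β : ℝ} {d j k : ℕ}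
    (hG : IsExpander G b d) (hd : 1 ≤ d) (hb : 0 < b) (hδ : 0 < δ) (hj : d ≤ j * (b * δ))
    (hp : p ∈ Set.Icc (0 : ℝ) 1) (hβ : 0 ≤ β) (hβj : β * (4 * j) = b * δ)
    (hk : 2 ≤ p ^ (2 * j) * β * k) (H : SimpleGraph V) :
    bernProb p (edgeFinset' G) (fun t => BigSplit H
      (H ⊔ SimpleGraph.fromEdgeSet (t : Set (Sym2 V))) k (δ * Fintype.card V)) ≤
        3 * Real.exp (-(p ^ (2 * j) * β / 2) * Fintype.card V) := by
  set n := (Fintype.card V : ℝ)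
  set r := p ^ (2 * j)
  have hr : r ∈ Set.Icc (0 : ℝ) 1 := ⟨pow_nonneg hp.1 _, pow_le_one₀ hp.1 hp.2⟩
  have hn : 0 ≤ n := Nat.cast_nonneg _
  rcases hn.eq_or_lt with hn₀ | hn₀
  · refine (bernProb_le_one hp _ _).trans ?_
    rw [← hn₀, mul_zero, Real.exp_zero]
    norm_num
  have hN : ((bigComps H k).card : ℝ) ≤ r * (β * n) / 2 := by
    have hNk : ((bigComps H k).card : ℝ) * k ≤ Fintype.card V :=
      mod_cast card_bigComps_mul_le H k
    linarith [mul_le_mul_of_nonneg_left hNk (mul_nonneg hr.1 hβ),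
      mul_le_mul_of_nonneg_left hk (Nat.cast_nonneg (α := ℝ) (bigComps H k).card)]
  have hm : (⌊β * n⌋₊ : ℝ) * (2 * j) ≤ b * (δ * n) / 2 :=
    calc (⌊β * n⌋₊ : ℝ) * (2 * j) ≤ β * n * (2 * j) := by
          gcongr
          exact Nat.floor_le (by positivity)
      _ = β * (4 * j) * n / 2 := by ring
      _ = b * (δ * n) / 2 := by rw [hβj, mul_assoc]
  calc _ ≤ 2 ^ (bigComps H k).card * (1 - r) ^ ⌊β * n⌋₊ :=
        hG.bernProb_bigSplit_le hd hb (by positivity)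
          (by linarith [mul_le_mul_of_nonneg_left hj hn₀.le]) hp hm H k
    _ ≤ 3 * Real.exp (-(r * (β * n) / 2)) :=
        two_pow_mul_one_sub_pow_le hr hN (Nat.lt_floor_add_one _).le
    _ = _ := by ring_nf

lemma exists_bernProb_bigSplit_le {d : ℕ} {b δ p : ℝ} (hd : 1 ≤ d) (hb : 0 < b) (hδ : 0 < δ)
    (hp : p ∈ Set.Ioc (0 : ℝ) 1) :
    ∃ c > 0, ∃ k₀ : ℕ, ∀ k ≥ k₀, ∀ (V : Type) [Fintype V] [DecidableEq V] (G H : SimpleGraph V),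
      IsExpander G b d →
      bernProb p (edgeFinset' G) (fun t => BigSplit H
        (H ⊔ SimpleGraph.fromEdgeSet (t : Set (Sym2 V))) k (δ * Fintype.card V)) ≤
          3 * Real.exp (-c * Fintype.card V) := by
  obtain ⟨j, hj⟩ := exists_nat_gt (d / (b * δ))
  have hj₀ : (0 : ℝ) < j := lt_of_le_of_lt (by positivity) hj
  have hp₀ : 0 < p := hp.1
  let β := b * δ / (4 * j)
  have hβ : 0 < β := by positivity
  obtain ⟨k₀, hk₀⟩ := exists_nat_ge (2 / (p ^ (2 * j) * β))
  refine ⟨p ^ (2 * j) * β / 2, by positivity, k₀, fun k hk V _ _ G H hG => ?_⟩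
  refine hG.bernProb_bigSplit_le_exp hd hb hδ ((div_lt_iff₀ (by positivity)).1 hj).le
    (Set.Ioc_subset_Icc_self hp) hβ.le (div_mul_cancel₀ _ (by positivity)) ?_ H
  rw [← div_le_iff₀' (by positivity)]
  exact hk₀.trans (Nat.cast_le.2 hk)

section

variable {G : SimpleGraph V} {b p p₁ p₂ a β : ℝ} {d k : ℕ}

lemma abs_excess_sub_le_of_abs_sub_lt {s u : Finset (Sym2 V)} {S S₁ L : ℝ} (hd : 1 ≤ d)
    (hG : ∀ v, G.degree v ≤ d) (hk : ((k + 1 : ℕ) : ℕ∞) < G.egirth) (ha : 0 < a)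
    (hsu : s ⊆ u) (hu : u ⊆ edgeFinset' G) (hS : S - S₁ ≤ a)
    (hL : |localExcess G u k - L| < a) (hSu : |((survivors G u k).card : ℝ) - S| < a)
    (hSs : |((survivors G s k).card : ℝ) - S₁| < a)
    (hsplit : ¬ BigSplit (SimpleGraph.fromEdgeSet (s : Set (Sym2 V)))
      (SimpleGraph.fromEdgeSet (u : Set (Sym2 V))) (k + 2) a)
    {γ : (SimpleGraph.fromEdgeSet (u : Set (Sym2 V))).ConnectedComponent}
    (hγ : IsLargestComp _ γ) :
    |((compEdges _ γ).card : ℝ) - (compVerts _ γ).card - L| ≤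
      10 * d * a + 2 * d * ((d : ℝ) + 1) ^ k := by
  have hgap : ((survivors G u k).card : ℝ) - (survivors G s k).card ≤ 3 * a := by
    linarith [(abs_lt.1 hSu).2, (abs_lt.1 hSs).1]
  have hda : a ≤ d * a := le_mul_of_one_le_left ha.le (Nat.one_le_cast.2 hd)
  calc _ ≤ _ := abs_sub_le _ (localExcess G u k) L
    _ ≤ d * (3 * a + 2 * (3 * a) + 2 * ((d : ℝ) + 1) ^ k) + a :=
      add_le_add (abs_excess_sub_localExcess_le hd hG hk hsu hu ha hgap hsplit hγ) hL.le
    _ ≤ _ := by linarith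

lemma bernProb_lt_abs_excess_sub_le (hd : 1 ≤ d) (hG : G.IsRegularOfDegree d)
    (hk : ((2 * k + 2 : ℕ) : ℕ∞) < G.egirth) (ha : 0 < a) (hp : p ∈ Set.Icc (0 : ℝ) 1)
    (hp₁ : p₁ ∈ Set.Icc (0 : ℝ) 1) (hp₂ : p₂ ∈ Set.Icc (0 : ℝ) 1)
    (h : 1 - p = (1 - p₁) * (1 - p₂))
    (hsurv : survivalDensity p d (extinctionProb p d k) -
      survivalDensity p₁ d (extinctionProb p₁ d k) ≤ a)
    (hsplit : ∀ H, bernProb p₂ (edgeFinset' G) (fun t => BigSplit H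
      (H ⊔ SimpleGraph.fromEdgeSet (t : Set (Sym2 V))) (k + 2) (a * Fintype.card V)) ≤ β) :
    bernProb p (edgeFinset' G) (fun u => ∃ γ, IsLargestComp
      (SimpleGraph.fromEdgeSet (u : Set (Sym2 V))) γ ∧
        10 * d * (a * Fintype.card V) + 2 * d * ((d : ℝ) + 1) ^ k <
          |((compEdges _ γ).card : ℝ) - (compVerts _ γ).card -
            excessDensity p d (extinctionProb p d k) * Fintype.card V|) ≤
      6 * Real.exp (-(2 * a ^ 2 / ((2 * d * ((d : ℝ) + 1) ^ (k + 1)) ^ 2 * d)) *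
        Fintype.card V) + β := by
  have hG' : ∀ v, G.degree v ≤ d := fun v => (hG v).le
  have hL := bernProb_le_abs_sub_le hp hG' (f := fun s => localExcess G s k)
    (abs_localExcess_insert_sub_le hd hG' k) ha.le
  have hS (p') (hp' : p' ∈ Set.Icc (0 : ℝ) 1) :=
    bernProb_le_abs_sub_le hp' hG' (f := fun s => (survivors G s k).card)
      (abs_card_survivors_insert_sub_le hd hG' k) ha.le
  simp only [bernExp_localExcess _ hG hk, bernExp_card_survivors _ hG hk] at hL hS
  refine (bernProb_le_of_union hp₁ hp₂ h ?_ fun s =>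
    hsplit (SimpleGraph.fromEdgeSet (s : Set (Sym2 V)))).trans <|
      (add_le_add_left (add_le_add ((bernProb_or_le hp _ _ _).trans (add_le_add hL (hS p hp)))
        (hS p₁ hp₁)) β).trans (by linarith)
  rintro s hs t ht ⟨γ, hγ, hlt⟩
  by_contra! hgood
  obtain ⟨⟨hL', hS'⟩, hS₁', hsplit'⟩ := hgood
  have hV : (0 : ℝ) < Fintype.card V :=
    Nat.cast_pos.2 (Fintype.card_pos_iff.2 ⟨γ.exists_rep.choose⟩)
  rw [← SimpleGraph.fromEdgeSet_union, ← Finset.coe_union] at hsplit'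
  refine hlt.not_ge (abs_excess_sub_le_of_abs_sub_lt hd hG' (lt_of_le_of_lt ?_ hk)
    (mul_pos ha hV) Finset.subset_union_left (Finset.union_subset hs ht) ?_ hL' hS' hS₁' hsplit' hγ)
  · exact Nat.cast_le.2 (by omega)
  · rw [← sub_mul]
    exact mul_le_mul_of_nonneg_right hsurv hV.le

lemma exists_bernProb_lt_abs_excess_sub_le {q ε : ℝ} (hd : 3 ≤ d) (hp : p ∈ Set.Ioo (0 : ℝ) 1)
    (hq : q ∈ Set.Ico (0 : ℝ) 1) (hfix : q = (1 - p + p * q) ^ (d - 1)) (hε : 0 < ε) (hb : 0 < b) :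
    ∃ c > 0, ∃ R > 0, ∃ K : ℝ, ∀ (V : Type) [Fintype V] [DecidableEq V] (G : SimpleGraph V),
      IsRegularExpander G b d → ((R : ℕ) : ℕ∞) ≤ G.egirth →
      bernProb p (edgeFinset' G) (fun u => ∃ γ, IsLargestComp
        (SimpleGraph.fromEdgeSet (u : Set (Sym2 V))) γ ∧ ε * Fintype.card V + K <
          |((compEdges _ γ).card : ℝ) - (compVerts _ γ).card -
            excessDensity p d q * Fintype.card V|) ≤ 9 * Real.exp (-c * Fintype.card V) := by
  have : (0 : ℝ) < d := Nat.cast_pos.2 (by omega)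
  obtain ⟨a, ha, hda⟩ : ∃ a > 0, 10 * d * a + a ≤ ε :=
    ⟨ε / (10 * d + 1), by positivity, by rw [← add_one_mul, mul_div_cancel₀ _ (by positivity)]⟩
  obtain ⟨p₁, hp₁, hsurv⟩ := exists_lt_eventually_survivalDensity_sub_le hd hp hq hfix ha
  obtain ⟨p₂, hp₂, h⟩ := exists_sprinkling_parameter hp.2 hp₁.2
  obtain ⟨c₁, hc₁, k₀, hsplit⟩ :=
    exists_bernProb_bigSplit_le (b := b) (by omega : 1 ≤ d) hb ha (Set.Ioo_subset_Ioc_self hp₂)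
  obtain ⟨k, ⟨hsurv, hexcess⟩, hk⟩ := ((hsurv.and (eventually_abs_excessDensity_sub_le hd hp hq hfix
    ha)).and (Filter.eventually_ge_atTop k₀)).exists
  set c₂ := 2 * a ^ 2 / ((2 * d * ((d : ℝ) + 1) ^ (k + 1)) ^ 2 * d)
  refine ⟨min c₂ c₁, lt_min (by positivity) hc₁, 2 * k + 3, by omega, 2 * d * ((d : ℝ) + 1) ^ k,
    fun V _ _ G hG hR => ?_⟩
  have hcard : (0 : ℝ) ≤ Fintype.card V := Nat.cast_nonneg _
  have hbad := bernProb_lt_abs_excess_sub_le (by omega) hG.isRegularOfDegree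
    (hR.trans_lt' (Nat.cast_lt.2 (by omega))) ha (Set.Ioo_subset_Icc_self hp)
    ⟨hp₁.1.le, (hp₁.2.trans hp.2).le⟩ (Set.Ioo_subset_Icc_self hp₂) h hsurv
    fun H => hsplit (k + 2) (by omega) V G H hG.1
  refine (bernProb_mono (Set.Ioo_subset_Icc_self hp) fun u _ => ?_).trans (hbad.trans ?_)
  · rintro ⟨γ, hγ, hlt⟩
    refine ⟨γ, hγ, ?_⟩
    have hdensity : |excessDensity p d (extinctionProb p d k) * Fintype.card V -
        excessDensity p d q * Fintype.card V| ≤ a * Fintype.card V := by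
      rw [← sub_mul, abs_mul, abs_of_nonneg hcard]
      exact mul_le_mul_of_nonneg_right hexcess hcard
    linarith [mul_le_mul_of_nonneg_right hda hcard, hlt.trans_le (abs_sub_le _
      (excessDensity p d (extinctionProb p d k) * Fintype.card V) _)]
  · have h₁ : Real.exp (-c₁ * Fintype.card V) ≤ Real.exp (-min c₂ c₁ * Fintype.card V) := by
      gcongr
      exact min_le_right _ _
    have h₂ : Real.exp (-c₂ * Fintype.card V) ≤ Real.exp (-min c₂ c₁ * Fintype.card V) := by
      gcongr
      exact min_le_left _ _
    linarith

end

end Concentration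

section Conclusion

omit [DecidableEq V] in
lemma one_sub_bernProb_le_percProb {G : SimpleGraph V} {p : ℝ} (hp : p ∈ Set.Icc (0 : ℝ) 1)
    {P : SimpleGraph V → Prop} {Q : Finset (Sym2 V) → Prop}
    (h : ∀ s : Finset (Sym2 V), ¬ Q s → P (SimpleGraph.fromEdgeSet (s : Set (Sym2 V)))) :
    1 - bernProb p (edgeFinset' G) Q ≤ percProb G p P :=
  (bernProb_not p _ Q).symm.trans_le (bernProb_mono hp fun s _ => h s)

lemma abs_excess_add_one_sub_le {H : SimpleGraph V} {c : H.ConnectedComponent} {τ x : ℝ}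
    (h : |((compEdges H c).card : ℝ) - (compVerts H c).card - τ| ≤ x) :
    |((compEdges H c).card : ℝ) - (compVerts H c).card + 1 - τ| ≤ x + 2 ∧
      |((twoCoreComp H c).edgeSet.ncard : ℝ) - (twoCoreComp H c).support.ncard + 1 - τ| ≤
        x + 2 := by
  have hcore := abs_le.1 (abs_twoCoreComp_excess_sub_le c)
  rw [abs_le] at h
  simp only [abs_le]
  refine ⟨⟨?_, ?_⟩, ?_, ?_⟩ <;> linarith

end Conclusion

theorem excess_of_giant_and_two_core (d : ℕ) (hd : 3 ≤ d) (p q : ℝ)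
    (hp : 1 / ((d : ℝ) - 1) < p) (hp1 : p < 1)
    (hq0 : 0 ≤ q) (hq1 : q < 1)
    (hq : q = (1 - p + p * q) ^ (d - 1))
    (ε b : ℝ) (hε : 0 < ε) (hb : 0 < b) :
    ∃ c > (0:ℝ), ∃ C > (0:ℝ), ∃ R : ℕ, 0 < R ∧
      ∀ (V : Type) [Fintype V] [DecidableEq V] (G : SimpleGraph V),
        IsRegularExpander G b d → (R : ℕ∞) ≤ G.girth →
        1 - C * Real.exp (-c * Fintype.card V) ≤
          percProb G p (fun H =>
            ∀ c₁ : H.ConnectedComponent, IsLargestComp H c₁ →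
              |(((compEdges H c₁).card : ℝ) - (compVerts H c₁).card + 1)
                  - ((1 / 2 * p * d * (1 - q ^ 2)) - (1 - q * (1 - p) - p * q ^ 2))
                    * Fintype.card V| ≤ 2 * ε * Fintype.card V ∧
              |(((twoCoreComp H c₁).edgeSet.ncard : ℝ)
                    - (twoCoreComp H c₁).support.ncard + 1)
                  - ((1 / 2 * p * d * (1 - q) ^ 2)
                    - (1 - q - ((d : ℝ) - 1) * p * q * (1 - q))) * Fintype.card V|
                ≤ 2 * ε * Fintype.card V) := by
  have hd₁ : (0 : ℝ) < d - 1 := sub_pos.2 (Nat.one_lt_cast.2 (by omega))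
  have hp' : p ∈ Set.Ioo (0 : ℝ) 1 := ⟨(one_div_pos.2 hd₁).trans hp, hp1⟩
  have hp'' := Set.Ioo_subset_Icc_self hp'
  obtain ⟨c, hc, R, hR, K, hbad⟩ :=
    exists_bernProb_lt_abs_excess_sub_le hd hp' ⟨hq0, hq1⟩ hq hε hb
  refine ⟨c, hc, 9 + Real.exp (c * ((K + 2) / ε)), by positivity, R, hR,
    fun V _ _ G hG hgirth => one_sub_add_mul_exp_le hc.le (by norm_num)
      (bernProb_nonneg hp'' _ _) fun hlarge => ?_⟩
  have hlarge : ε * Fintype.card V + K + 2 ≤ 2 * ε * Fintype.card V := by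
    linarith [(div_le_iff₀' hε).1 hlarge]
  have htwoCore : 1 / 2 * p * d * (1 - q) ^ 2 - (1 - q - ((d : ℝ) - 1) * p * q * (1 - q)) =
      1 / 2 * p * d * (1 - q ^ 2) - (1 - q * (1 - p) - p * q ^ 2) := by ring
  refine (sub_le_sub_left (hbad V G hG (hgirth.trans (ENat.natCast_toNat_le_self _))) 1).trans
    (one_sub_bernProb_le_percProb hp'' fun s hgood γ hγ => ?_)
  rw [htwoCore, ← excessDensity_of_fixedPoint (by omega) hq]
  obtain ⟨hgiant, hcore⟩ := abs_excess_add_one_sub_le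
    (not_lt.1 fun hlt => hgood ⟨γ, hγ, hlt⟩)
  exact ⟨hgiant.trans hlarge, hcore.trans hlarge⟩

end Percolation

end
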